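/- arXiv:2506.22421 — 2 statements merged into one kernel-verified Lean document; each statement's English description precedes it below -/
import Mathlib

section
/- Let p ≥ 1 and let μ, ν be Borel probability measures on ℝ^{dT} with ∫ |x|_p^p dμ < ∞ and ∫ |x|_p^p dν < ∞. Suppose c_2, …, c_T ≥ 0 are constants such that for every t = 2, …, T and ν_{1:t−1}-almost every x_{1:t−1}, ∫ |x̃_t|_p^p ν_{x_{1:t−1}}(dx̃_t) ≤ c_t · (1 + |x_{1:t−1}|_p^p). Then ATV_p(μ, ν)^p ≤ (1 + 2 Σ_{t=1}^{T−1} ∏_{s=t+1}^{T} (1 + c_s)) · TV_p(μ, ν)^p. -/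
open MeasureTheory ProbabilityTheory
open scoped ENNReal

noncomputable section

/-- The path space `ℝ^{dT}`: `T` time steps with state space `ℝ^d`. -/
abbrev Traj (d T : ℕ) : Type := Fin T → Fin d → ℝ

/-- Restriction of a path to its first `t` coordinates. -/
def restr (d : ℕ) {t T : ℕ} (h : t ≤ T) (x : Traj d T) : Traj d t :=
  fun i => x (Fin.castLE h i)

lemma measurable_restr (d : ℕ) {t T : ℕ} (h : t ≤ T) : Measurable (restr d h) :=
  measurable_pi_lambda _ (fun i => measurable_pi_apply _)

/-- σ-algebra generated by the first `t` coordinates of the first component. -/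
def sigmaX (d T : ℕ) {t : ℕ} (h : t ≤ T) : MeasurableSpace (Traj d T × Traj d T) :=
  MeasurableSpace.comap (fun ω => restr d h ω.1) inferInstance

/-- σ-algebra generated by the first `t` coordinates of the second component. -/
def sigmaY (d T : ℕ) {t : ℕ} (h : t ≤ T) : MeasurableSpace (Traj d T × Traj d T) :=
  MeasurableSpace.comap (fun ω => restr d h ω.2) inferInstance

lemma sigmaX_le (d T : ℕ) {t : ℕ} (h : t ≤ T) :
    sigmaX d T h ≤ (inferInstance : MeasurableSpace (Traj d T × Traj d T)) :=
  ((measurable_restr d h).comp measurable_fst).comap_le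

lemma sigmaY_le (d T : ℕ) {t : ℕ} (h : t ≤ T) :
    sigmaY d T h ≤ (inferInstance : MeasurableSpace (Traj d T × Traj d T)) :=
  ((measurable_restr d h).comp measurable_snd).comap_le

/-- A coupling `π` of two laws on the path space is *bicausal* if for each `t < T`,
`σ(Y_1,…,Y_t)` is conditionally independent of `σ(X_1,…,X_T)` given `σ(X_1,…,X_t)`, and
symmetrically. -/
def IsBicausal (d T : ℕ) (π : Measure (Traj d T × Traj d T)) [IsFiniteMeasure π] : Prop :=
  ∀ t, 1 ≤ t → ∀ h : t + 1 ≤ T,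
    CondIndep (sigmaX d T (Nat.le_of_succ_le h)) (sigmaY d T (Nat.le_of_succ_le h))
      (sigmaX d T (le_refl T)) (sigmaX_le d T (Nat.le_of_succ_le h)) π ∧
    CondIndep (sigmaY d T (Nat.le_of_succ_le h)) (sigmaX d T (Nat.le_of_succ_le h))
      (sigmaY d T (le_refl T)) (sigmaY_le d T (Nat.le_of_succ_le h)) π

/-- The set of couplings of `μ` and `ν`. -/
def Cpl {α : Type*} [MeasurableSpace α] (μ ν : Measure α) : Set (Measure (α × α)) :=
  {π | IsProbabilityMeasure π ∧ π.map Prod.fst = μ ∧ π.map Prod.snd = ν}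

/-- The set of bicausal couplings of `μ` and `ν`. -/
def BCpl {d T : ℕ} (μ ν : Measure (Traj d T)) : Set (Measure (Traj d T × Traj d T)) :=
  {π | π ∈ Cpl μ ν ∧ ∃ _ : IsFiniteMeasure π, IsBicausal d T π}

/-- Weighted total variation distance. -/
def TVw {d T : ℕ} (w : Traj d T → ℝ) (μ ν : Measure (Traj d T)) : ℝ≥0∞ :=
  ⨅ π ∈ Cpl μ ν, ∫⁻ q in {q : Traj d T × Traj d T | q.1 ≠ q.2},
    (ENNReal.ofReal (w q.1) + ENNReal.ofReal (w q.2)) ∂π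

/-- Weighted adapted total variation distance. -/
def ATVw {d T : ℕ} (w : Traj d T → ℝ) (μ ν : Measure (Traj d T)) : ℝ≥0∞ :=
  ⨅ π ∈ BCpl μ ν, ∫⁻ q in {q : Traj d T × Traj d T | q.1 ≠ q.2},
    (ENNReal.ofReal (w q.1) + ENNReal.ofReal (w q.2)) ∂π

/-- `p`-th power of the adapted Wasserstein distance (cost `|x-y|_p^p`). -/
def AWpow (p : ℝ) {d T : ℕ} (μ ν : Measure (Traj d T)) : ℝ≥0∞ :=
  ⨅ π ∈ BCpl μ ν, ∫⁻ q, ENNReal.ofReal (∑ i, ∑ j, |q.1 i j - q.2 i j| ^ p) ∂π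

/-- The weight `w_p(x) = 1 + |x|_p^p`. -/
def wp (p : ℝ) {d T : ℕ} (x : Traj d T) : ℝ := 1 + ∑ i, ∑ j, |x i j| ^ p

/-!
Split off the diagonal mass `η` of a coupling of `μ = η + α` and `ν = η + β`; its cost is the
integral of the weight against `ξ = α + β`. A coupling that is causal in both directions is built
one time step at a time: after two equal pasts, the next positions are drawn from a coupling of the
conditional laws `k` of `μ` and `l` of `ν` that keeps the common part `k ∧ l` on the diagonal.

Let the defect `D` be a measure that, added to the diagonal part of the current coupling, dominates
the current marginal of `η`. Since `μ` and `ν` both lie between `η` and `η + ξ`, the next marginal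
of `η` lies below both `(η + ξ) ⊗ k` and `(η + ξ) ⊗ l`, hence below `(η + ξ) ⊗ (k ∧ l)`. The defect
therefore evolves as `D ↦ (D + ξ) ⊗ (k ∧ l)`, and since `k ∧ l ≤ l` the moment condition on `l`
multiplies the weight of `D + ξ` by at most `1 + c`. Iterating `C ↦ (1 + c) (C + 1)` yields the sum
of products, and the factor `2` arises because the defect is missing from both marginals.
-/

section Kernels

variable {X E : Type*} [MeasurableSpace X] [MeasurableSpace E]

lemma compProd_mono_left {μ ν : Measure X} [SFinite μ] [SFinite ν] (h : μ ≤ ν)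
    (k : Kernel X E) [IsSFiniteKernel k] : μ ⊗ₘ k ≤ ν ⊗ₘ k :=
  Measure.le_iff.2 fun A hA => by
    simpa only [Measure.compProd_apply hA] using lintegral_mono' h le_rfl

lemma compProd_apply_le_of_slice_le (μ : Measure X) [SFinite μ] {k l : Kernel X E}
    [IsSFiniteKernel k] [IsSFiniteKernel l] {A : Set (X × E)} (hA : MeasurableSet A)
    (h : ∀ x, k x (Prod.mk x ⁻¹' A) ≤ l x (Prod.mk x ⁻¹' A)) : (μ ⊗ₘ k) A ≤ (μ ⊗ₘ l) A := by
  simpa only [Measure.compProd_apply hA] using lintegral_mono h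

lemma compProd_mono_right (μ : Measure X) [SFinite μ] {k l : Kernel X E} [IsSFiniteKernel k]
    [IsSFiniteKernel l] (h : k ≤ l) : μ ⊗ₘ k ≤ μ ⊗ₘ l :=
  Measure.le_iff.2 fun _ hA => compProd_apply_le_of_slice_le μ hA fun x => h x _

lemma exists_add_eq_of_le {γ k : Kernel X E} [IsFiniteKernel k] (h : γ ≤ k) :
    ∃ k' : Kernel X E, γ + k' = k := by
  have := isFiniteKernel_of_le h
  refine ⟨⟨fun x => k x - γ x, ?_⟩, Kernel.ext fun x => ?_⟩
  · refine Measure.measurable_of_measurable_coe _ fun A hA => ?_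
    simp only [Measure.sub_apply hA (h _)]
    exact (k.measurable_coe hA).sub (γ.measurable_coe hA)
  · exact (add_comm _ _).trans (Measure.sub_add_cancel_of_le (h x))

section CommonPart

variable [MeasurableSpace.CountableOrCountablyGenerated X E]

/-- The common part `k ∧ l` of two kernels, whose density with respect to `k + l` is the minimum of
the densities of `k` and `l`. Densities are taken as jointly measurable kernel Radon-Nikodym
derivatives, so that the result is again a kernel. -/
def commonPart (k l : Kernel X E) [IsFiniteKernel k] [IsFiniteKernel l] : Kernel X E :=
  (k + l).withDensity fun x z => min (k.rnDeriv (k + l) x z) (l.rnDeriv (k + l) x z)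

variable (k l : Kernel X E) [IsFiniteKernel k] [IsFiniteKernel l]

lemma withDensity_rnDeriv_add_left : (k + l).withDensity (k.rnDeriv (k + l)) = k :=
  Kernel.ext fun _ =>
    Kernel.withDensity_rnDeriv_eq (Measure.le_add_right le_rfl).absolutelyContinuous

lemma commonPart_comm : commonPart l k = commonPart k l := by
  simp only [commonPart, add_comm l k, min_comm]

lemma commonPart_apply (x : X) (A : Set E) :
    commonPart k l x A =
      ∫⁻ z in A, min (k.rnDeriv (k + l) x z) (l.rnDeriv (k + l) x z) ∂(k + l) x :=
  Kernel.withDensity_apply' _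
    ((Kernel.measurable_rnDeriv k (k + l)).min (Kernel.measurable_rnDeriv l (k + l))) _ _

lemma setLIntegral_rnDeriv_add_left (x : X) (A : Set E) :
    ∫⁻ z in A, k.rnDeriv (k + l) x z ∂(k + l) x = k x A := by
  conv_rhs => rw [← withDensity_rnDeriv_add_left k l]
  exact (Kernel.withDensity_apply' _ (Kernel.measurable_rnDeriv k (k + l)) _ _).symm

lemma commonPart_le_left : commonPart k l ≤ k := fun x A => by
  rw [commonPart_apply, ← setLIntegral_rnDeriv_add_left k l]
  exact lintegral_mono fun _ => min_le_left _ _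

lemma commonPart_le_right : commonPart k l ≤ l :=
  commonPart_comm k l ▸ commonPart_le_left l k

instance : IsFiniteKernel (commonPart k l) := isFiniteKernel_of_le (commonPart_le_left k l)

variable {k l}

lemma le_commonPart_apply_of_rnDeriv_le {x : X} {A : Set E} (hA : MeasurableSet A)
    (h : ∀ z ∈ A, k.rnDeriv (k + l) x z ≤ l.rnDeriv (k + l) x z) :
    k x A ≤ commonPart k l x A := by
  rw [commonPart_apply, ← setLIntegral_rnDeriv_add_left k l]
  exact setLIntegral_mono' hA fun z hz => le_min le_rfl (h z hz)

lemma le_commonPart_apply_of_le_rnDeriv {x : X} {A : Set E} (hA : MeasurableSet A)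
    (h : ∀ z ∈ A, l.rnDeriv (k + l) x z ≤ k.rnDeriv (k + l) x z) :
    l x A ≤ commonPart k l x A := by
  rw [add_comm k l] at h
  exact commonPart_comm k l ▸ le_commonPart_apply_of_rnDeriv_le hA h

lemma le_compProd_commonPart {ρ : Measure (X × E)} {σ : Measure X} [SFinite σ]
    (hk : ρ ≤ σ ⊗ₘ k) (hl : ρ ≤ σ ⊗ₘ l) : ρ ≤ σ ⊗ₘ commonPart k l := by
  let H : Set (X × E) := {q | k.rnDeriv (k + l) q.1 q.2 ≤ l.rnDeriv (k + l) q.1 q.2}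
  have hH : MeasurableSet H :=
    measurableSet_le (Kernel.measurable_rnDeriv k (k + l)) (Kernel.measurable_rnDeriv l (k + l))
  refine Measure.le_iff.2 fun A hA => ?_
  have on_H : ρ (A ∩ H) ≤ (σ ⊗ₘ commonPart k l) (A ∩ H) :=
    (hk _).trans <| compProd_apply_le_of_slice_le σ (hA.inter hH) fun x =>
      le_commonPart_apply_of_rnDeriv_le (measurable_prodMk_left (hA.inter hH)) fun _ hz => hz.2
  have off_H : ρ (A \ H) ≤ (σ ⊗ₘ commonPart k l) (A \ H) :=
    (hl _).trans <| compProd_apply_le_of_slice_le σ (hA.diff hH) fun x =>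
      le_commonPart_apply_of_le_rnDeriv (measurable_prodMk_left (hA.diff hH))
        fun _ hz => le_of_not_ge hz.2
  simpa only [measure_inter_add_sdiff A hH] using add_le_add on_H off_H

lemma exists_compProd_ge_lintegral_le {ρ : Measure (X × E)} {σ ν : Measure X} [SFinite σ]
    [SFinite ν] (hk : ρ ≤ σ ⊗ₘ k) (hνσ : ν ≤ σ) (hl : ρ ≤ ν ⊗ₘ l) {f : X → E → ℝ≥0∞}
    (hf : Measurable (Function.uncurry f)) {φ : X → ℝ≥0∞} (hφ : Measurable φ)
    (hdrift : ∀ᵐ x ∂ν, ∫⁻ z, f x z ∂l x ≤ φ x) :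
    ∃ γ : Kernel X E, γ ≤ k ∧ γ ≤ l ∧ ρ ≤ σ ⊗ₘ γ ∧ ∀ x, ∫⁻ z, f x z ∂γ x ≤ φ x := by
  classical
  let S : Set X := {x | ∫⁻ z, f x z ∂l x ≤ φ x}
  have hS : MeasurableSet S := measurableSet_le hf.lintegral_kernel_prod_right hφ
  let l' := Kernel.piecewise hS l 0
  have l'_eq {x : X} (hx : x ∈ S) : l' x = l x := by simp [l', Kernel.piecewise_apply, hx]
  have l'_eq_zero {x : X} (hx : x ∉ S) : l' x = 0 := by simp [l', Kernel.piecewise_apply, hx]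
  have hl' : l' ≤ l := fun x => by
    by_cases hx : x ∈ S
    · exact (l'_eq hx).le
    · exact (l'_eq_zero hx).trans_le (Measure.zero_le _)
  have hνl : ν ⊗ₘ l = ν ⊗ₘ l' :=
    Measure.compProd_congr (hdrift.mono fun x hx => (l'_eq hx).symm)
  refine ⟨commonPart k l', commonPart_le_left k l', (commonPart_le_right k l').trans hl',
    le_compProd_commonPart hk ((hl.trans hνl.le).trans (compProd_mono_left hνσ l')), fun x => ?_⟩
  refine (lintegral_mono' (commonPart_le_right k l' x) le_rfl).trans ?_
  by_cases hx : x ∈ S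
  · exact (congrArg (fun m => ∫⁻ z, f x z ∂m) (l'_eq hx)).trans_le hx
  · simp [l'_eq_zero hx]

end CommonPart

lemma exists_kernel_fst_snd_eq_of_mass_eq {k l : Kernel X E} [IsFiniteKernel k] [IsFiniteKernel l]
    (h : ∀ x, k x Set.univ = l x Set.univ) :
    ∃ M : Kernel X (E × E), M.fst = k ∧ M.snd = l := by
  let c : X → ℝ≥0∞ := fun x => (l x Set.univ)⁻¹
  have hc : Measurable (Function.uncurry fun (x : X) (_ : E × E) => c x) :=
    (l.measurable_coe MeasurableSet.univ).inv.comp measurable_fst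
  have apply_eq (x : X) : (k ×ₖ l).withDensity (fun x _ => c x) x = c x • (k x).prod (l x) := by
    rw [Kernel.withDensity_apply _ hc, withDensity_const, Kernel.prod_apply]
  have normalize {m : Measure E} (x : X) (hm : m Set.univ = l x Set.univ) :
      (c x * l x Set.univ) • m = m := by
    by_cases h₀ : l x Set.univ = 0
    · rw [Measure.measure_univ_eq_zero.1 (hm.trans h₀), smul_zero]
    · rw [ENNReal.inv_mul_cancel h₀ (measure_ne_top _ _), one_smul]
  refine ⟨(k ×ₖ l).withDensity fun x _ => c x, Kernel.ext fun x => ?_, Kernel.ext fun x => ?_⟩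
  · rw [Kernel.fst_apply, apply_eq, Measure.map_smul, Measure.map_fst_prod, smul_smul,
      normalize x (h x)]
  · rw [Kernel.snd_apply, apply_eq, Measure.map_smul, Measure.map_snd_prod, smul_smul, h x,
      normalize x rfl]

lemma exists_kernel_coupling {k l γ : Kernel X E} [IsMarkovKernel k] [IsMarkovKernel l]
    (hk : γ ≤ k) (hl : γ ≤ l) :
    ∃ K : Kernel X (E × E), IsMarkovKernel K ∧ K.fst = k ∧ K.snd = l ∧
      ∀ x, (γ x).map (fun z => (z, z)) ≤ K x := by
  have := isFiniteKernel_of_le hk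
  obtain ⟨k', rfl⟩ := exists_add_eq_of_le hk
  obtain ⟨l', rfl⟩ := exists_add_eq_of_le hl
  have : IsFiniteKernel k' := isFiniteKernel_of_le (ν := γ + k') fun _ => Measure.le_add_left le_rfl
  have : IsFiniteKernel l' := isFiniteKernel_of_le (ν := γ + l') fun _ => Measure.le_add_left le_rfl
  have mass_eq (x : X) : k' x Set.univ = l' x Set.univ :=
    (ENNReal.add_right_inj (measure_ne_top (γ x) Set.univ)).1 <|
      (measure_univ (μ := (γ + k') x)).trans (measure_univ (μ := (γ + l') x)).symm
  obtain ⟨M, hMk, hMl⟩ := exists_kernel_fst_snd_eq_of_mass_eq mass_eq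
  have hdiag : Measurable fun z : E => (z, z) := by fun_prop
  let K := γ.map (fun z => (z, z)) + M
  have hK (x : X) : K x = (γ x).map (fun z => (z, z)) + M x :=
    congrArg (· + M x) (Kernel.map_apply γ hdiag x)
  have hfst : K.fst = γ + k' := Kernel.ext fun x => by
    rw [Kernel.fst_apply, hK, Measure.map_add _ _ measurable_fst,
      Measure.map_map measurable_fst hdiag, ← Kernel.fst_apply, hMk]
    exact congrArg (· + k' x) Measure.map_id
  have hsnd : K.snd = γ + l' := Kernel.ext fun x => by
    rw [Kernel.snd_apply, hK, Measure.map_add _ _ measurable_snd,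
      Measure.map_map measurable_snd hdiag, ← Kernel.snd_apply, hMl]
    exact congrArg (· + l' x) Measure.map_id
  refine ⟨K, ⟨fun x => ?_⟩, hfst, hsnd, fun x => (hK x).symm ▸ Measure.le_add_right le_rfl⟩
  have : IsProbabilityMeasure ((K x).map Prod.fst) := by
    rw [← Kernel.fst_apply, hfst]
    infer_instance
  exact Measure.isProbabilityMeasure_of_map Prod.fst

lemma exists_kernel_coupling_prod [MeasurableEq X] {k l γ : Kernel X E} [IsMarkovKernel k]
    [IsMarkovKernel l] (hk : γ ≤ k) (hl : γ ≤ l) :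
    ∃ K : Kernel (X × X) (E × E), IsMarkovKernel K ∧ K.fst = k.comap Prod.fst measurable_fst ∧
      K.snd = l.comap Prod.snd measurable_snd ∧ ∀ x, (γ x).map (fun z => (z, z)) ≤ K (x, x) := by
  classical
  let γ' : Kernel (X × X) E :=
    Kernel.piecewise measurableSet_diagonal (γ.comap Prod.fst measurable_fst) 0
  have h_diag (x : X) : γ' (x, x) = γ x := by simp [γ', Kernel.piecewise_apply]
  have h_off {x y : X} (hxy : x ≠ y) : γ' (x, y) = 0 := by simp [γ', Kernel.piecewise_apply, hxy]
  have hk' : γ' ≤ k.comap Prod.fst measurable_fst := by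
    rintro ⟨x, y⟩
    obtain rfl | hxy := eq_or_ne x y
    · exact (h_diag x).trans_le (hk x)
    · exact (h_off hxy).trans_le (Measure.zero_le _)
  have hl' : γ' ≤ l.comap Prod.snd measurable_snd := by
    rintro ⟨x, y⟩
    obtain rfl | hxy := eq_or_ne x y
    · exact (h_diag x).trans_le (hl x)
    · exact (h_off hxy).trans_le (Measure.zero_le _)
  obtain ⟨K, hK, hKk, hKl, hγ⟩ := exists_kernel_coupling hk' hl'
  exact ⟨K, hK, hKk, hKl, fun x => h_diag x ▸ hγ (x, x)⟩

lemma exists_coupling {μ ν η : Measure E} [IsProbabilityMeasure μ] [IsProbabilityMeasure ν]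
    (hμ : η ≤ μ) (hν : η ≤ ν) :
    ∃ π ∈ Cpl μ ν, η.map (fun z => (z, z)) ≤ π := by
  obtain ⟨K, hK, hKμ, hKν, hη⟩ := exists_kernel_coupling (X := Unit) (k := Kernel.const Unit μ)
    (l := Kernel.const Unit ν) (γ := Kernel.const Unit η) (fun _ => hμ) (fun _ => hν)
  refine ⟨K (), ⟨inferInstance, ?_, ?_⟩, hη ()⟩
  · rw [← Kernel.fst_apply, hKμ, Kernel.const_apply]
  · rw [← Kernel.snd_apply, hKν, Kernel.const_apply]

end Kernels

section Couplings

variable {X : Type*} [MeasurableSpace X]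

lemma lintegral_fst_add_snd (π : Measure (X × X)) {w : X → ℝ≥0∞} (hw : Measurable w) :
    ∫⁻ q, (w q.1 + w q.2) ∂π = ∫⁻ x, w x ∂π.map Prod.fst + ∫⁻ x, w x ∂π.map Prod.snd := by
  rw [lintegral_map hw measurable_fst, lintegral_map hw measurable_snd]
  exact lintegral_add_left (hw.comp measurable_fst) _

variable [MeasurableEq X]

lemma exists_lintegral_offDiag_eq_of_mem_Cpl {μ ν : Measure X} {ρ : Measure (X × X)}
    (hρ : ρ ∈ Cpl μ ν) :
    ∃ η α β : Measure X, η + α = μ ∧ η + β = ν ∧ ∀ w : X → ℝ≥0∞, Measurable w →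
      ∫⁻ q in {q : X × X | q.1 ≠ q.2}, (w q.1 + w q.2) ∂ρ = ∫⁻ x, w x ∂α + ∫⁻ x, w x ∂β := by
  obtain ⟨-, rfl, rfl⟩ := hρ
  let ρ₀ := ρ.restrict (Set.diagonal X)
  let ρ₁ := ρ.restrict (Set.diagonal X)ᶜ
  have hadd : ρ₀ + ρ₁ = ρ := Measure.restrict_add_restrict_compl measurableSet_diagonal
  have hsnd : ρ₀.map Prod.fst = ρ₀.map Prod.snd :=
    Measure.map_congr <|
      (ae_restrict_mem measurableSet_diagonal).mono fun _ => Set.mem_diagonal_iff.1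
  refine ⟨ρ₀.map Prod.fst, ρ₁.map Prod.fst, ρ₁.map Prod.snd, ?_, ?_,
    fun _ hw => lintegral_fst_add_snd ρ₁ hw⟩
  · rw [← Measure.map_add _ _ measurable_fst, hadd]
  · rw [hsnd, ← Measure.map_add _ _ measurable_snd, hadd]

lemma lintegral_offDiag_le_of_map_diag_le {π : Measure (X × X)} [IsFiniteMeasure π]
    {θ η α β D : Measure X} (hθ : θ.map (fun x => (x, x)) ≤ π) (hfst : π.map Prod.fst = η + α)
    (hsnd : π.map Prod.snd = η + β) (hη : η ≤ θ + D) {w : X → ℝ≥0∞} (hw : Measurable w) :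
    ∫⁻ q in {q : X × X | q.1 ≠ q.2}, (w q.1 + w q.2) ∂π ≤
      ∫⁻ x, w x ∂α + ∫⁻ x, w x ∂β + 2 * ∫⁻ x, w x ∂D := by
  have hdiag : Measurable fun x : X => (x, x) := by fun_prop
  have := isFiniteMeasure_of_le π hθ
  have : IsFiniteMeasure θ := Measure.isFiniteMeasure_of_map hdiag.aemeasurable
  let π' := π - θ.map (fun x => (x, x))
  have hπ : θ.map (fun x => (x, x)) + π' = π := by
    rw [add_comm, Measure.sub_add_cancel_of_le hθ]
  have off_le : π.restrict {q | q.1 ≠ q.2} ≤ π' := by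
    have : (θ.map fun x => (x, x)).restrict {q | q.1 ≠ q.2} = 0 :=
      Measure.restrict_eq_zero.2 <|
        (Measure.map_apply hdiag (measurableSet_eq_fun measurable_fst measurable_snd).compl).trans
          (by simp)
    rw [← hπ, Measure.restrict_add, this, zero_add]
    exact Measure.restrict_le_self
  have map_le {f : X × X → X} (hf : Measurable f) (hfdiag : f ∘ (fun x => (x, x)) = id)
      {ξ : Measure X} (hξ : π.map f = η + ξ) : π'.map f ≤ D + ξ := by
    refine Measure.le_of_add_le_add_left (μ := θ) ?_
    calc θ + π'.map f
      _ = π.map f := by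
        rw [← hπ, Measure.map_add _ _ hf, Measure.map_map hf hdiag, hfdiag, Measure.map_id]
      _ ≤ θ + (D + ξ) := by rw [hξ, ← add_assoc]; gcongr
  calc ∫⁻ q in {q : X × X | q.1 ≠ q.2}, (w q.1 + w q.2) ∂π
    _ ≤ ∫⁻ q, (w q.1 + w q.2) ∂π' := lintegral_mono' off_le le_rfl
    _ = ∫⁻ x, w x ∂π'.map Prod.fst + ∫⁻ x, w x ∂π'.map Prod.snd :=
      lintegral_fst_add_snd π' hw
    _ ≤ ∫⁻ x, w x ∂(D + α) + ∫⁻ x, w x ∂(D + β) :=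
      add_le_add (lintegral_mono' (map_le measurable_fst rfl hfst) le_rfl)
        (lintegral_mono' (map_le measurable_snd rfl hsnd) le_rfl)
    _ = ∫⁻ x, w x ∂α + ∫⁻ x, w x ∂β + 2 * ∫⁻ x, w x ∂D := by
      rw [lintegral_add_measure, lintegral_add_measure]
      ring

end Couplings

section Causality

section General

variable {Ω X Y Z E F : Type*} [MeasurableSpace X] [MeasurableSpace Y] [MeasurableSpace Z]
  [MeasurableSpace E] [MeasurableSpace F]

lemma map_compProd_comap (μ : Measure X) [SFinite μ] {f : X → Y} (hf : Measurable f)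
    (k : Kernel Y E) [IsSFiniteKernel k] :
    (μ ⊗ₘ k.comap f hf).map (Prod.map f id) = μ.map f ⊗ₘ k := by
  refine Measure.ext fun A hA => ?_
  rw [Measure.map_apply (hf.prodMap measurable_id) hA,
    Measure.compProd_apply (hf.prodMap measurable_id hA), Measure.compProd_apply hA,
    lintegral_map (Kernel.measurable_kernel_prodMk_left hA) hf]
  rfl

lemma map_prodMap_fst_compProd (μ : Measure X) [SFinite μ] (K : Kernel X (E × F))
    [IsSFiniteKernel K] : (μ ⊗ₘ K).map (Prod.map id Prod.fst) = μ ⊗ₘ K.fst := by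
  rw [Kernel.fst_eq, Measure.compProd_map measurable_fst]

lemma map_swap_compProd_compProd_comap_fst (μ : Measure X) [SFinite μ] (k : Kernel X Y)
    [IsSFiniteKernel k] (l : Kernel X E) [IsSFiniteKernel l] :
    ((μ ⊗ₘ k) ⊗ₘ l.comap Prod.fst measurable_fst).map (fun q => ((q.1.1, q.2), q.1.2)) =
      (μ ⊗ₘ l) ⊗ₘ k.comap Prod.fst measurable_fst := by
  refine Measure.ext_of_lintegral _ fun f hf => ?_
  rw [lintegral_map hf (by fun_prop), Measure.lintegral_compProd (by fun_prop),
    Measure.lintegral_compProd (by fun_prop), Measure.lintegral_compProd hf,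
    Measure.lintegral_compProd (by fun_prop)]
  simp only [Kernel.comap_apply]
  exact lintegral_congr fun x => lintegral_lintegral_swap (by fun_prop)

lemma map_compProd_eq_of_map_eq_compProd {π : Measure (X × Y)} [SFinite π] {h : Y → Z}
    (hh : Measurable h) {g : Kernel X Z} [IsSFiniteKernel g]
    (hπ : π.map (Prod.map id h) = π.map Prod.fst ⊗ₘ g) {k : Kernel X E} [IsSFiniteKernel k]
    {K : Kernel (X × Y) (E × F)} [IsSFiniteKernel K]
    (hK : K.fst = k.comap Prod.fst measurable_fst) :
    (π ⊗ₘ K).map (fun q => ((q.1.1, q.2.1), h q.1.2)) =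
      (π.map Prod.fst ⊗ₘ k) ⊗ₘ g.comap Prod.fst measurable_fst := by
  have hid : Measurable (Prod.map (id : X → X) h) := measurable_id.prodMap hh
  have law_h : (π ⊗ₘ k.comap Prod.fst measurable_fst).map (Prod.map (Prod.map id h) id) =
      (π.map Prod.fst ⊗ₘ g) ⊗ₘ k.comap Prod.fst measurable_fst := by
    rw [← hπ, ← map_compProd_comap _ hid]
    rfl
  rw [← map_swap_compProd_compProd_comap_fst, ← law_h, ← hK, ← map_prodMap_fst_compProd,
    Measure.map_map (hid.prodMap measurable_id) (by fun_prop),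
    Measure.map_map (by fun_prop) (by fun_prop)]
  rfl

lemma condIndep_of_map_prodMk_eq_compProd [MeasurableSpace Ω] [StandardBorelSpace Ω]
    [StandardBorelSpace X] [Nonempty X] [StandardBorelSpace Y] [Nonempty Y] {π : Measure Ω}
    [IsFiniteMeasure π] {U : Ω → X} {V : Ω → Y} {f : X → Z} (hU : Measurable U)
    (hV : Measurable V) (hf : Measurable f) {g : Kernel Z Y} [IsFiniteKernel g]
    (h : π.map (fun ω => (U ω, V ω)) = π.map U ⊗ₘ g.comap f hf) :
    CondIndep (MeasurableSpace.comap (f ∘ U) inferInstance)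
      (MeasurableSpace.comap V inferInstance) (MeasurableSpace.comap U inferInstance)
      (hf.comp hU).comap_le π := by
  have hfid : Measurable fun x => (f x, x) := by fun_prop
  have law_f : π.map (fun ω => (f (U ω), V ω)) = π.map (f ∘ U) ⊗ₘ g := by
    rw [← Measure.map_map hf hU, ← map_compProd_comap _ hf, ← h,
      Measure.map_map (by fun_prop) (by fun_prop)]
    rfl
  have law_fid : π.map (fun ω => ((f (U ω), U ω), V ω)) =
      π.map (fun ω => (f (U ω), U ω)) ⊗ₘ g.prodMkRight X := by
    have : π.map (fun ω => (f (U ω), U ω)) = (π.map U).map fun x => (f x, x) :=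
      (Measure.map_map hfid hU).symm
    rw [this, ← map_compProd_comap _ hfid]
    change _ = (π.map U ⊗ₘ g.comap f hf).map _
    rw [← h, Measure.map_map (by fun_prop) (by fun_prop)]
    rfl
  refine (condIndepFun_iff_condIndep _ _ _ _ _).1 (CondIndepFun.symm ?_)
  refine (condIndepFun_iff_condDistrib_prod_ae_eq_prodMkRight hV hU (hf.comp hU)).2 ?_
  have cond_f : ∀ᵐ q ∂π.map (fun ω => (f (U ω), U ω)), condDistrib V (f ∘ U) π q.1 = g q.1 := by
    have := condDistrib_ae_eq_of_measure_eq_compProd (f ∘ U) hV.aemeasurable law_f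
    have : ∀ᵐ z ∂(π.map fun ω => (f (U ω), U ω)).map Prod.fst,
        condDistrib V (f ∘ U) π z = g z := by
      rwa [Measure.map_map measurable_fst (by fun_prop)]
    exact ae_of_ae_map measurable_fst.aemeasurable this
  filter_upwards [condDistrib_ae_eq_of_measure_eq_compProd _ hV.aemeasurable law_fid, cond_f]
    with q hq hqf
  exact hq.trans hqf.symm

end General

variable {d n : ℕ}

/-- A law of pairs of paths is causal if, for every `t < n`, the conditional law of the first `t`
coordinates of the second path given the whole first path depends only on the first `t`
coordinates of the latter. -/
def IsCausal (π : Measure (Traj d n × Traj d n)) : Prop :=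
  ∀ t, 1 ≤ t → ∀ h : t + 1 ≤ n, ∃ g : Kernel (Traj d t) (Traj d t), IsMarkovKernel g ∧
    π.map (Prod.map id (restr d (Nat.le_of_succ_le h))) =
      π.map Prod.fst ⊗ₘ g.comap _ (measurable_restr d (Nat.le_of_succ_le h))

lemma isBicausal_of_isCausal {π : Measure (Traj d n × Traj d n)} [IsFiniteMeasure π]
    (hπ : IsCausal π) (hπ_swap : IsCausal (π.map Prod.swap)) : IsBicausal d n π := by
  intro t ht h
  have hr := measurable_restr d (Nat.le_of_succ_le h)
  constructor
  · obtain ⟨g, hg, hπg⟩ := hπ t ht h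
    exact condIndep_of_map_prodMk_eq_compProd measurable_fst (hr.comp measurable_snd) hr hπg
  · obtain ⟨g, hg, hπg⟩ := hπ_swap t ht h
    rw [Measure.map_map (by fun_prop) measurable_swap,
      Measure.map_map measurable_fst measurable_swap] at hπg
    exact condIndep_of_map_prodMk_eq_compProd measurable_snd (hr.comp measurable_fst) hr hπg

lemma IsCausal.exists_kernel_of_le {π : Measure (Traj d n × Traj d n)} [IsFiniteMeasure π]
    (hπ : IsCausal π) {t : ℕ} (ht : 1 ≤ t) (h : t ≤ n) :
    ∃ g : Kernel (Traj d t) (Traj d t), IsMarkovKernel g ∧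
      π.map (Prod.map id (restr d h)) = π.map Prod.fst ⊗ₘ g.comap _ (measurable_restr d h) := by
  obtain rfl | hlt := h.eq_or_lt
  · exact ⟨π.condKernel, inferInstance, Measure.map_id.trans (π.disintegrate π.condKernel).symm⟩
  · exact hπ t ht hlt

section Snoc

/-- Appending one time step to a path. -/
def snocPath (q : Traj d n × (Fin d → ℝ)) : Traj d (n + 1) :=
  Fin.snoc (α := fun _ => Fin d → ℝ) q.1 q.2

@[fun_prop]
lemma measurable_snocPath : Measurable (snocPath : Traj d n × (Fin d → ℝ) → Traj d (n + 1)) := by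
  refine measurable_pi_lambda _ fun i => ?_
  induction i using Fin.lastCases with
  | last => simpa only [snocPath, Fin.snoc_last] using measurable_snd
  | cast i => simpa only [snocPath, Fin.snoc_castSucc] using measurable_fst.eval

lemma restr_snocPath {t : ℕ} (h : t ≤ n) (q : Traj d n × (Fin d → ℝ)) :
    restr d (h.trans n.le_succ) (snocPath q) = restr d h q.1 :=
  funext fun i => Fin.snoc_castSucc (α := fun _ => Fin d → ℝ) q.2 q.1 (Fin.castLE h i)

/-- A path of length `n + 1` is a path of length `n` with one more time step. -/
def snocEquiv (d n : ℕ) : Traj d n × (Fin d → ℝ) ≃ᵐ Traj d (n + 1) where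
  toFun := snocPath
  invFun x := (restr d n.le_succ x, x (Fin.last n))
  left_inv q := Prod.ext (restr_snocPath le_rfl q)
    (Fin.snoc_last (α := fun _ => Fin d → ℝ) q.2 q.1)
  right_inv x := Fin.snoc_init_self x
  measurable_toFun := measurable_snocPath
  measurable_invFun := (measurable_restr d n.le_succ).prodMk (measurable_pi_apply _)

lemma map_snocPath_compProd (m : Measure (Traj d n)) [SFinite m]
    (k : Kernel (Traj d n) (Fin d → ℝ)) [IsSFiniteKernel k] :
    (m ⊗ₘ k).map snocPath = m.bind fun x => (k x).map (Fin.snoc x) := by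
  have snoc (x : Traj d n) : Measurable fun z : Fin d → ℝ => snocPath (x, z) := by fun_prop
  change _ = m.bind fun x => (k x).map fun z => snocPath (x, z)
  have hk : Measurable fun x => (k x).map fun z => snocPath (x, z) := by
    refine Measure.measurable_of_measurable_coe _ fun A hA => ?_
    simp_rw [Measure.map_apply (snoc _) hA]
    exact Kernel.measurable_kernel_prodMk_left (measurable_snocPath hA)
  refine Measure.ext fun A hA => ?_
  rw [Measure.map_apply measurable_snocPath hA, Measure.compProd_apply (measurable_snocPath hA),
    Measure.bind_apply hA hk.aemeasurable]
  exact lintegral_congr fun x => (Measure.map_apply (snoc x) hA).symm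

lemma exists_map_snocPath_compProd_eq_map_restr {T : ℕ} (h : n + 1 ≤ T) (μ : Measure (Traj d T))
    [IsFiniteMeasure μ] :
    ∃ k : Kernel (Traj d n) (Fin d → ℝ), IsMarkovKernel k ∧
      (μ.map (restr d (Nat.le_of_succ_le h)) ⊗ₘ k).map snocPath = μ.map (restr d h) := by
  let μ' := (μ.map (restr d h)).map (snocEquiv d n).symm
  have hfst : μ'.fst = μ.map (restr d (Nat.le_of_succ_le h)) :=
    (Measure.map_map measurable_fst (snocEquiv d n).symm.measurable).trans
      (Measure.map_map (measurable_restr d n.le_succ) (measurable_restr d h))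
  refine ⟨μ'.condKernel, inferInstance, ?_⟩
  rw [← hfst, Measure.disintegrate]
  exact (snocEquiv d n).map_map_symm

/-- The law of a pair of paths with law `π` once each is continued by one time step, the two new
positions being drawn jointly from `K`. -/
def snocPair (π : Measure (Traj d n × Traj d n))
    (K : Kernel (Traj d n × Traj d n) ((Fin d → ℝ) × (Fin d → ℝ))) :
    Measure (Traj d (n + 1) × Traj d (n + 1)) :=
  (π ⊗ₘ K).map fun q => (snocPath (q.1.1, q.2.1), snocPath (q.1.2, q.2.2))

variable {π : Measure (Traj d n × Traj d n)} [SFinite π]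
  {K : Kernel (Traj d n × Traj d n) ((Fin d → ℝ) × (Fin d → ℝ))} [IsSFiniteKernel K]
  {k l γ : Kernel (Traj d n) (Fin d → ℝ)} [IsSFiniteKernel k] [IsSFiniteKernel l]
  [IsSFiniteKernel γ]

lemma map_fst_snocPair (hK : K.fst = k.comap Prod.fst measurable_fst) :
    (snocPair π K).map Prod.fst = (π.map Prod.fst ⊗ₘ k).map snocPath := by
  rw [← map_compProd_comap π measurable_fst k, ← hK, ← map_prodMap_fst_compProd, snocPair,
    Measure.map_map measurable_fst (by fun_prop), Measure.map_map (by fun_prop) (by fun_prop),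
    Measure.map_map (by fun_prop) (by fun_prop)]
  rfl

lemma map_swap_snocPair :
    (snocPair π K).map Prod.swap =
      snocPair (π.map Prod.swap) ((K.map Prod.swap).comap Prod.swap measurable_swap) := by
  rw [snocPair, snocPair, ← map_compProd_comap π measurable_swap]
  change _ = ((π ⊗ₘ K.map Prod.swap).map _).map _
  rw [Measure.compProd_map measurable_swap,
    Measure.map_map measurable_swap (by fun_prop), Measure.map_map (by fun_prop) (by fun_prop),
    Measure.map_map (by fun_prop) (by fun_prop)]
  rfl

lemma map_diag_map_snocPath_le {θ : Measure (Traj d n)} [SFinite θ]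
    (hθ : θ.map (fun x => (x, x)) ≤ π) (hγ : ∀ x, (γ x).map (fun z => (z, z)) ≤ K (x, x)) :
    ((θ ⊗ₘ γ).map snocPath).map (fun x => (x, x)) ≤ snocPair π K := by
  have hdiag : Measurable fun x : Traj d n => (x, x) := by fun_prop
  have hdiag' : Measurable fun z : Fin d → ℝ => (z, z) := by fun_prop
  have hγK : γ.map (fun z => (z, z)) ≤ K.comap _ hdiag := fun x =>
    (Kernel.map_apply γ hdiag' x).trans_le (hγ x)
  have hle : (θ ⊗ₘ γ.map fun z => (z, z)).map (Prod.map (fun x => (x, x)) id) ≤ π ⊗ₘ K := by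
    refine (Measure.map_mono (compProd_mono_right θ hγK) (by fun_prop)).trans ?_
    rw [map_compProd_comap]
    exact compProd_mono_left hθ K
  refine Eq.trans_le ?_ (Measure.map_mono hle (by fun_prop))
  rw [Measure.compProd_map hdiag', Measure.map_map (by fun_prop) (by fun_prop),
    Measure.map_map (by fun_prop) (by fun_prop), Measure.map_map (by fun_prop) (by fun_prop)]
  rfl

lemma IsCausal.snocPair_of_fst_eq [IsFiniteMeasure π] (hπ : IsCausal π)
    (hK : K.fst = k.comap Prod.fst measurable_fst) : IsCausal (snocPair π K) := by
  intro t ht h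
  obtain ⟨g, hg, hπg⟩ := hπ.exists_kernel_of_le ht (Nat.le_of_succ_le_succ h)
  refine ⟨g, hg, ?_⟩
  have hr := measurable_restr d (Nat.le_of_succ_le_succ h)
  have law := map_compProd_eq_of_map_eq_compProd hr hπg hK
  have comap_eq : (g.comap _ hr).comap Prod.fst measurable_fst =
      (g.comap _ (measurable_restr d (Nat.le_of_succ_le h))).comap _ measurable_snocPath :=
    Kernel.ext fun q => congrArg g (restr_snocPath (Nat.le_of_succ_le_succ h) q).symm
  rw [map_fst_snocPair hK, ← map_compProd_comap _ measurable_snocPath, ← comap_eq, ← law,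
    snocPair, Measure.map_map (measurable_id.prodMap (measurable_restr d _)) (by fun_prop),
    Measure.map_map (by fun_prop) (by fun_prop)]
  exact congrArg (Measure.map · _) (funext fun q =>
    Prod.ext rfl (restr_snocPath (Nat.le_of_succ_le_succ h) (q.1.2, q.2.2)))

end Snoc

end Causality

section GrowthConstant

lemma sum_prod_Icc_succ {R : Type*} [CommSemiring R] (a : ℕ → R) {n : ℕ} (hn : 1 ≤ n) :
    ∑ t ∈ Finset.Icc 1 n, ∏ s ∈ Finset.Icc (t + 1) (n + 1), a s =
      a (n + 1) * (∑ t ∈ Finset.Icc 1 (n - 1), ∏ s ∈ Finset.Icc (t + 1) n, a s + 1) := by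
  obtain ⟨m, rfl⟩ := Nat.exists_eq_add_of_le' hn
  rw [Nat.add_sub_cancel, Finset.sum_Icc_succ_top (by omega), Finset.Icc_self,
    Finset.prod_singleton, mul_add, mul_one, Finset.mul_sum]
  congr 1
  refine Finset.sum_congr rfl fun t ht => ?_
  rw [Finset.prod_Icc_succ_top (by have := (Finset.mem_Icc.1 ht).2; omega), mul_comm]

lemma ofReal_one_add_two_mul_sum_prod {T : ℕ} {a : ℕ → ℝ}
    (ha : ∀ t, 2 ≤ t → t ≤ T → 0 ≤ a t) :
    ENNReal.ofReal (1 + 2 * ∑ t ∈ Finset.Icc 1 (T - 1), ∏ s ∈ Finset.Icc (t + 1) T, a s) =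
      1 + 2 * ∑ t ∈ Finset.Icc 1 (T - 1), ∏ s ∈ Finset.Icc (t + 1) T, ENNReal.ofReal (a s) := by
  have factor_nonneg {t s : ℕ} (ht : t ∈ Finset.Icc 1 (T - 1)) (hs : s ∈ Finset.Icc (t + 1) T) :
      0 ≤ a s := by
    rw [Finset.mem_Icc] at ht hs
    exact ha s (by omega) hs.2
  have prod_nonneg {t : ℕ} (ht : t ∈ Finset.Icc 1 (T - 1)) :
      0 ≤ ∏ s ∈ Finset.Icc (t + 1) T, a s := Finset.prod_nonneg fun s hs => factor_nonneg ht hs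
  have sum_nonneg := Finset.sum_nonneg fun t ht => prod_nonneg (t := t) ht
  rw [ENNReal.ofReal_add zero_le_one (mul_nonneg zero_le_two sum_nonneg), ENNReal.ofReal_one,
    ENNReal.ofReal_mul zero_le_two, ENNReal.ofReal_ofNat,
    ENNReal.ofReal_sum_of_nonneg fun t ht => prod_nonneg ht]
  congr 2
  exact Finset.sum_congr rfl fun t ht =>
    ENNReal.ofReal_prod_of_nonneg fun s hs => factor_nonneg ht hs

end GrowthConstant

section StickyCoupling

variable {d n : ℕ}

/-- A sticky coupling of the path laws `μ` and `ν`: causal in both directions, and carrying the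
common part `η` on the diagonal up to the defect `D`. -/
structure IsStickyCoupling (μ ν η D : Measure (Traj d n))
    (π : Measure (Traj d n × Traj d n)) : Prop where
  mem_Cpl : π ∈ Cpl μ ν
  isCausal : IsCausal π
  isCausal_swap : IsCausal (π.map Prod.swap)
  exists_map_diag_le : ∃ θ : Measure (Traj d n), θ.map (fun x => (x, x)) ≤ π ∧ η ≤ θ + D

namespace IsStickyCoupling

variable {μ ν η D : Measure (Traj d n)} {π : Measure (Traj d n × Traj d n)}

lemma mem_BCpl (h : IsStickyCoupling μ ν η D π) : π ∈ BCpl μ ν :=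
  have := h.mem_Cpl.1
  ⟨h.mem_Cpl, inferInstance, isBicausal_of_isCausal h.isCausal h.isCausal_swap⟩

lemma add_right (h : IsStickyCoupling μ ν η D π) (ξ : Measure (Traj d n)) :
    IsStickyCoupling μ ν (η + ξ) (D + ξ) π where
  __ := h
  exists_map_diag_le := by
    obtain ⟨θ, hθ, hη⟩ := h.exists_map_diag_le
    exact ⟨θ, hθ, by rw [← add_assoc]; gcongr⟩

lemma exists_of_length_one {μ ν η : Measure (Traj d 1)} [IsProbabilityMeasure μ]
    [IsProbabilityMeasure ν] (hμ : η ≤ μ) (hν : η ≤ ν) : ∃ π, IsStickyCoupling μ ν η 0 π := by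
  obtain ⟨π, hπ, hη⟩ := exists_coupling hμ hν
  exact ⟨π, hπ, fun _ _ _ => by omega, fun _ _ _ => by omega, η, hη, by rw [add_zero]⟩

lemma snoc [SFinite η] [SFinite D] (h : IsStickyCoupling μ ν η D π)
    {k l γ : Kernel (Traj d n) (Fin d → ℝ)} [IsMarkovKernel k] [IsMarkovKernel l] [IsFiniteKernel γ]
    {K : Kernel (Traj d n × Traj d n) ((Fin d → ℝ) × (Fin d → ℝ))} [IsMarkovKernel K]
    (hKk : K.fst = k.comap Prod.fst measurable_fst) (hKl : K.snd = l.comap Prod.snd measurable_snd)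
    (hγ : ∀ x, (γ x).map (fun z => (z, z)) ≤ K (x, x)) :
    IsStickyCoupling ((μ ⊗ₘ k).map snocPath) ((ν ⊗ₘ l).map snocPath) ((η ⊗ₘ γ).map snocPath)
      ((D ⊗ₘ γ).map snocPath) (snocPair π K) := by
  obtain ⟨hπ, hfst, hsnd⟩ := h.mem_Cpl
  have hswap : (π.map Prod.swap).map Prod.fst = ν := by
    rw [Measure.map_map measurable_fst measurable_swap, ← hsnd]
    rfl
  have hKswap : ((K.map Prod.swap).comap Prod.swap measurable_swap).fst =
      l.comap Prod.fst measurable_fst := by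
    refine Kernel.ext fun q => ?_
    rw [Kernel.fst_apply, Kernel.comap_apply, Kernel.map_apply _ measurable_swap,
      Measure.map_map measurable_fst measurable_swap]
    exact (Kernel.snd_apply K q.swap).symm.trans (congrArg (· q.swap) hKl)
  refine ⟨⟨?_, ?_, ?_⟩, h.isCausal.snocPair_of_fst_eq hKk, ?_, ?_⟩
  · exact Measure.isProbabilityMeasure_map (by fun_prop)
  · rw [map_fst_snocPair hKk, hfst]
  · rw [← hswap, ← map_fst_snocPair hKswap, ← map_swap_snocPair,
      Measure.map_map measurable_fst measurable_swap]
    rfl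
  · rw [map_swap_snocPair]
    exact h.isCausal_swap.snocPair_of_fst_eq hKswap
  · obtain ⟨θ, hθ, hη⟩ := h.exists_map_diag_le
    have := isFiniteMeasure_of_le π hθ
    have : IsFiniteMeasure θ :=
      Measure.isFiniteMeasure_of_map (f := fun x => (x, x)) (by fun_prop)
    refine ⟨(θ ⊗ₘ γ).map snocPath, map_diag_map_snocPath_le hθ hγ, ?_⟩
    rw [← Measure.map_add _ _ measurable_snocPath, ← Measure.compProd_add_left]
    exact Measure.map_mono (compProd_mono_left hη γ) measurable_snocPath

lemma exists_snoc [SFinite η] [SFinite D] (h : IsStickyCoupling μ ν η D π) (hμη : μ ≤ η)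
    (hνη : ν ≤ η) {k l : Kernel (Traj d n) (Fin d → ℝ)} [IsMarkovKernel k] [IsMarkovKernel l]
    {η' : Measure (Traj d (n + 1))} (hk : η' ≤ (μ ⊗ₘ k).map snocPath)
    (hl : η' ≤ (ν ⊗ₘ l).map snocPath) {f : Traj d (n + 1) → ℝ≥0∞} (hf : Measurable f)
    {φ : Traj d n → ℝ≥0∞} (hφ : Measurable φ)
    (hdrift : ∀ᵐ x ∂ν, ∫⁻ z, f (snocPath (x, z)) ∂l x ≤ φ x) :
    ∃ D' π', SFinite D' ∧
      IsStickyCoupling ((μ ⊗ₘ k).map snocPath) ((ν ⊗ₘ l).map snocPath) η' D' π' ∧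
      ∫⁻ x, f x ∂D' ≤ ∫⁻ x, φ x ∂D := by
  have := h.mem_Cpl.1
  have : IsFiniteMeasure μ := h.mem_Cpl.2.1 ▸ inferInstance
  have : IsFiniteMeasure ν := h.mem_Cpl.2.2 ▸ inferInstance
  have symm_le {m : Measure (Traj d n × (Fin d → ℝ))} (hm : η' ≤ m.map snocPath) :
      η'.map (snocEquiv d n).symm ≤ m :=
    (Measure.map_mono hm (snocEquiv d n).symm.measurable).trans_eq (snocEquiv d n).map_symm_map
  obtain ⟨γ, hγk, hγl, hη', hγf⟩ := exists_compProd_ge_lintegral_le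
    ((symm_le hk).trans (compProd_mono_left hμη k)) hνη (symm_le hl)
    (f := fun x z => f (snocPath (x, z))) (by fun_prop) hφ hdrift
  have := isFiniteKernel_of_le hγk
  obtain ⟨K, _, hKk, hKl, hγK⟩ := exists_kernel_coupling_prod hγk hγl
  refine ⟨(D ⊗ₘ γ).map snocPath, snocPair π K, inferInstance,
    { h.snoc hKk hKl hγK with exists_map_diag_le := ?_ }, ?_⟩
  · obtain ⟨θ, hθ, hη⟩ := (h.snoc hKk hKl hγK).exists_map_diag_le
    refine ⟨θ, hθ, le_trans ?_ hη⟩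
    exact (snocEquiv d n).map_map_symm.symm.trans_le (Measure.map_mono hη' measurable_snocPath)
  · rw [lintegral_map hf measurable_snocPath, Measure.lintegral_compProd (by fun_prop)]
    exact lintegral_mono hγf

end IsStickyCoupling

lemma exists_isStickyCoupling_map_restr {T : ℕ} {η α β : Measure (Traj d T)}
    [IsProbabilityMeasure (η + α)] [IsProbabilityMeasure (η + β)]
    {κ : ∀ t, Kernel (Traj d t) (Fin d → ℝ)} [∀ t, IsMarkovKernel (κ t)]
    (hκ : ∀ t, 1 ≤ t → ∀ h : t + 1 ≤ T, (η + β).map (restr d h) =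
      ((η + β).map (restr d (Nat.le_of_succ_le h)) ⊗ₘ κ t).map snocPath)
    {v : ∀ t, Traj d t → ℝ≥0∞} (hv : ∀ t, Measurable (v t))
    (hvT : ∀ t (h : t ≤ T) x, v t (restr d h x) ≤ v T x) {a : ℕ → ℝ≥0∞}
    (hdrift : ∀ t, 1 ≤ t → ∀ h : t + 1 ≤ T,
      ∀ᵐ y ∂(η + β).map (restr d (Nat.le_of_succ_le h)),
        ∫⁻ z, v (t + 1) (snocPath (y, z)) ∂κ t y ≤ a (t + 1) * v t y)
    (hn : 1 ≤ n) (h : n ≤ T) :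
    ∃ D π, SFinite D ∧
      IsStickyCoupling ((η + α).map (restr d h)) ((η + β).map (restr d h)) (η.map (restr d h))
        D π ∧
      ∫⁻ x, v n x ∂D ≤
        (∑ t ∈ Finset.Icc 1 (n - 1), ∏ s ∈ Finset.Icc (t + 1) n, a s) *
          (∫⁻ x, v T x ∂α + ∫⁻ x, v T x ∂β) := by
  have map_le {t : ℕ} (h : t ≤ T) {μ₁ μ₂ : Measure (Traj d T)} (hle : μ₁ ≤ μ₂) :
      μ₁.map (restr d h) ≤ μ₂.map (restr d h) := Measure.map_mono hle (measurable_restr d h)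
  have hηα : η ≤ η + α := Measure.le_add_right le_rfl
  have hηβ : η ≤ η + β := Measure.le_add_right le_rfl
  have := isFiniteMeasure_of_le _ hηα
  have : IsFiniteMeasure α := isFiniteMeasure_of_le (η + α) (Measure.le_add_left le_rfl)
  have : IsFiniteMeasure β := isFiniteMeasure_of_le (η + β) (Measure.le_add_left le_rfl)
  induction n, hn using Nat.le_induction with
  | base =>
    have := Measure.isProbabilityMeasure_map (μ := η + α) (measurable_restr d h).aemeasurable
    have := Measure.isProbabilityMeasure_map (μ := η + β) (measurable_restr d h).aemeasurable
    obtain ⟨π, hπ⟩ := IsStickyCoupling.exists_of_length_one (map_le h hηα) (map_le h hηβ)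
    exact ⟨0, π, inferInstance, hπ, by simp⟩
  | succ n hn ih =>
    obtain ⟨D, π, _, hπ, hD⟩ := ih (Nat.le_of_succ_le h)
    have hr := measurable_restr d (Nat.le_of_succ_le h)
    let ξ := (α + β).map (restr d (Nat.le_of_succ_le h))
    obtain ⟨k, _, hk⟩ := exists_map_snocPath_compProd_eq_map_restr h (η + α)
    have le_ξ {α' : Measure (Traj d T)} (h' : α' ≤ α + β) :
        (η + α').map (restr d (Nat.le_of_succ_le h)) ≤
          η.map (restr d (Nat.le_of_succ_le h)) + ξ := by
      rw [← Measure.map_add _ _ hr]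
      exact map_le _ (by gcongr)
    obtain ⟨D', π', hD', hπ', hint⟩ := (hπ.add_right ξ).exists_snoc
      (le_ξ (Measure.le_add_right le_rfl)) (le_ξ (Measure.le_add_left le_rfl))
      ((map_le h hηα).trans_eq hk.symm) ((map_le h hηβ).trans_eq (hκ n hn h)) (hv (n + 1))
      ((hv n).const_mul _) (hdrift n hn h)
    rw [hk, ← hκ n hn h] at hπ'
    refine ⟨D', π', hD', hπ', hint.trans ?_⟩
    rw [Nat.add_sub_cancel, sum_prod_Icc_succ a hn, lintegral_const_mul _ (hv n),
      lintegral_add_measure, mul_assoc, add_mul, one_mul]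
    gcongr
    rw [lintegral_map (hv n) hr, ← lintegral_add_measure]
    exact lintegral_mono fun x => hvT n _ x

end StickyCoupling

section Weights

variable {d n : ℕ} {p : ℝ}

@[fun_prop]
lemma measurable_wp : Measurable (wp p : Traj d n → ℝ) := by
  unfold wp
  fun_prop

lemma wp_restr_le {m : ℕ} (h : n ≤ m) (x : Traj d m) : wp p (restr d h x) ≤ wp p x := by
  unfold wp restr
  refine add_le_add_right ?_ _
  refine (Finset.sum_map Finset.univ (Fin.castLEEmb h) fun i => ∑ j, |x i j| ^ p).symm.trans_le ?_
  exact Finset.sum_le_univ_sum_of_nonneg fun i => by positivity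

lemma wp_nonneg (x : Traj d n) : 0 ≤ wp p x := by
  unfold wp
  positivity

lemma wp_snocPath (x : Traj d n) (z : Fin d → ℝ) :
    wp p (snocPath (x, z)) = wp p x + ∑ j, |z j| ^ p := by
  unfold wp snocPath
  rw [Fin.sum_univ_castSucc, ← add_assoc]
  simp only [Fin.snoc_castSucc, Fin.snoc_last]

lemma lintegral_wp_snocPath_le {m : Measure (Fin d → ℝ)} [IsProbabilityMeasure m] {c : ℝ}
    (hc : 0 ≤ c) {x : Traj d n}
    (h : ∫⁻ z, ENNReal.ofReal (∑ j, |z j| ^ p) ∂m ≤ ENNReal.ofReal (c * wp p x)) :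
    ∫⁻ z, ENNReal.ofReal (wp p (snocPath (x, z))) ∂m ≤ ENNReal.ofReal ((1 + c) * wp p x) := by
  have hz (z : Fin d → ℝ) : 0 ≤ ∑ j, |z j| ^ p := by positivity
  simp_rw [wp_snocPath, ENNReal.ofReal_add (wp_nonneg x) (hz _)]
  rw [lintegral_add_left measurable_const, lintegral_const, measure_univ, mul_one, add_mul, one_mul,
    ENNReal.ofReal_add (wp_nonneg x) (mul_nonneg hc (wp_nonneg x))]
  gcongr

end Weights

theorem atv_p_le_tv_p_general {d T : ℕ} (hT : 1 ≤ T) {w : ∀ t, Traj d t → ℝ}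
    (hw : ∀ t, Measurable (w t)) (hwT : ∀ t (h : t ≤ T) x, w t (restr d h x) ≤ w T x)
    (μ ν : Measure (Traj d T)) [IsProbabilityMeasure μ] [IsProbabilityMeasure ν]
    (κ : ∀ t, Kernel (Traj d t) (Fin d → ℝ)) [∀ t, IsMarkovKernel (κ t)]
    (hκ : ∀ t, 1 ≤ t → ∀ h : t + 1 ≤ T, ν.map (restr d h) =
      (ν.map (restr d (Nat.le_of_succ_le h)) ⊗ₘ κ t).map snocPath)
    {a : ℕ → ℝ} (ha : ∀ t, 2 ≤ t → t ≤ T → 0 ≤ a t)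
    (hdrift : ∀ t, 1 ≤ t → ∀ h : t + 1 ≤ T, ∀ᵐ y ∂ν.map (restr d (Nat.le_of_succ_le h)),
      ∫⁻ z, ENNReal.ofReal (w (t + 1) (snocPath (y, z))) ∂κ t y ≤
        ENNReal.ofReal (a (t + 1) * w t y)) :
    ATVw (w T) μ ν ≤
      ENNReal.ofReal (1 + 2 * ∑ t ∈ Finset.Icc 1 (T - 1), ∏ s ∈ Finset.Icc (t + 1) T, a s) *
        TVw (w T) μ ν := by
  have const_eq := ofReal_one_add_two_mul_sum_prod ha
  have const_ne_zero := const_eq.trans_ne (one_pos.trans_le le_self_add).ne'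
  simp_rw [TVw, ENNReal.mul_iInf_of_ne const_ne_zero ENNReal.ofReal_ne_top]
  refine le_iInf₂ fun ρ hρ => ?_
  obtain ⟨η, α, β, rfl, rfl, off_diag_eq⟩ := exists_lintegral_offDiag_eq_of_mem_Cpl hρ
  obtain ⟨D, π, -, hπ, hD⟩ := exists_isStickyCoupling_map_restr (α := α) hκ
    (v := fun t x => ENNReal.ofReal (w t x)) (fun t => (hw t).ennreal_ofReal)
    (fun t h x => ENNReal.ofReal_le_ofReal (hwT t h x)) (a := fun s => ENNReal.ofReal (a s))
    (fun t ht h => (hdrift t ht h).mono fun y hy =>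
      hy.trans_eq (ENNReal.ofReal_mul (ha _ (by omega) h))) hT le_rfl
  have restr_self : restr d le_rfl = (id : Traj d T → Traj d T) := rfl
  rw [restr_self, Measure.map_id, Measure.map_id, Measure.map_id] at hπ
  obtain ⟨θ, hθ, hη⟩ := hπ.exists_map_diag_le
  have := hπ.mem_Cpl.1
  have hwT' : Measurable fun x => ENNReal.ofReal (w T x) := (hw T).ennreal_ofReal
  refine (iInf₂_le π hπ.mem_BCpl).trans <| (lintegral_offDiag_le_of_map_diag_le hθ
    hπ.mem_Cpl.2.1 hπ.mem_Cpl.2.2 hη hwT').trans ?_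
  rw [off_diag_eq _ hwT', const_eq, add_mul, one_mul, mul_assoc]
  gcongr

/-- `ATV_p^p(μ,ν) ≤ (1 + 2 ∑_{t=1}^{T-1} ∏_{s=t+1}^{T} (1+c_s)) TV_p^p(μ,ν)`
under the conditional moment assumption on `ν`. -/
theorem atv_p_le_tv_p (d T : ℕ) (hd : 1 ≤ d) (hT : 1 ≤ T) (p : ℝ) (hp : 1 ≤ p)
    (μ ν : Measure (Traj d T)) [IsProbabilityMeasure μ] [IsProbabilityMeasure ν]
    (hμmom : (∫⁻ x, ENNReal.ofReal (∑ i, ∑ j, |x i j| ^ p) ∂μ) < ⊤)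
    (hνmom : (∫⁻ x, ENNReal.ofReal (∑ i, ∑ j, |x i j| ^ p) ∂ν) < ⊤)
    -- the constants `c_2, …, c_T ≥ 0`
    (c : ℕ → ℝ) (hc : ∀ t, 2 ≤ t → t ≤ T → 0 ≤ c t)
    -- a disintegration (family of conditional kernels) of `ν`
    (κ : ∀ t : ℕ, Traj d t → Measure (Fin d → ℝ))
    (hκm : ∀ t, Measurable (κ t))
    (hκp : ∀ t x, IsProbabilityMeasure (κ t x))
    (hκdis : ∀ t, ∀ h : t + 1 ≤ T,
      ν.map (restr d h) =
        (ν.map (restr d (Nat.le_of_succ_le h))).bind (fun x => (κ t x).map (Fin.snoc x)))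
    -- conditional moment bound: for `ν_{1:t-1}`-a.e. `x_{1:t-1}`,
    -- `∫ |x̃_t|_p^p ν_{x_{1:t-1}}(dx̃_t) ≤ c_t (1 + |x_{1:t-1}|_p^p)`
    (hcm : ∀ t, 1 ≤ t → ∀ h : t + 1 ≤ T,
      ∀ᵐ y ∂(ν.map (restr d (Nat.le_of_succ_le h))),
        (∫⁻ z, ENNReal.ofReal (∑ j, |z j| ^ p) ∂(κ t y))
          ≤ ENNReal.ofReal (c (t + 1) * (1 + ∑ i, ∑ j, |y i j| ^ p))) :
    ATVw (wp p) μ ν ≤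
      ENNReal.ofReal
          (1 + 2 * ∑ t ∈ Finset.Icc 1 (T - 1), ∏ s ∈ Finset.Icc (t + 1) T, (1 + c s))
        * TVw (wp p) μ ν := by
  let κ' (t : ℕ) : Kernel (Traj d t) (Fin d → ℝ) := ⟨κ t, hκm t⟩
  have (t : ℕ) : IsMarkovKernel (κ' t) := ⟨hκp t⟩
  refine atv_p_le_tv_p_general hT (fun _ => measurable_wp) (fun _ h => wp_restr_le h) μ ν κ'
    (fun t _ h => by rw [map_snocPath_compProd]; exact hκdis t h) (a := fun s => 1 + c s)
    (fun t h2 ht => add_nonneg zero_le_one (hc t h2 ht)) fun t ht h => ?_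
  exact (hcm t ht h).mono fun y hy => lintegral_wp_snocPath_le (hc (t + 1) (by omega) h) hy

end
end

section
/- For every integer T ≥ 1 (with d = 1) and every ε > 0, there exist Borel probability measures μ, ν on ℝ^T such that TV(μ, ν) > 0 and ATV(μ, ν) ≥ (2T − 1 − ε) · TV(μ, ν). In particular, the constant 2T − 1 in the inequality ATV ≤ (2T − 1) · TV cannot be replaced by any smaller constant valid for all pairs of probability measures on ℝ^T. -/
open MeasureTheory ProbabilityTheory
open scoped ENNReal

noncomputable section

/-
Fix two paths `z`, `w` that differ at time 1, and consider the law that follows `z` or `w` with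
probability `1 / 2` and is killed at each step with probability `1 - r`. Moving a fraction `δ` of
its mass to the unkilled path `z`, respectively `w`, gives `μ` and `ν`, and a coupling that leaves
the common part in place separates only mass `δ`. For small `r` and `δ = r ^ T`, the mass `p` of
every prefix of `z` or `w` is still common to `μ` and `ν` up to a small proportion, so most of it
has to be coupled inside that prefix; a bicausal coupling then moves both components by the
conditional laws given the prefix, and these differ by about `δ / p`. It thus separates mass `δ` at
time 1 and, anew, about `δ` at each of the `T - 1` later times along each of the two paths, which
amounts to `(2 * T - 1) * δ`.
-/

section Conditioning

variable {Ω β : Type*} [MeasurableSpace β] [MeasurableSingletonClass β]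

lemma condExp_mul_measureReal_preimage_singleton [MeasurableSpace Ω] {f : Ω → β}
    (hf : Measurable f) (π : Measure Ω) [IsFiniteMeasure π] {S : Set Ω} (hS : MeasurableSet S)
    (z : Ω) :
    (π⟦S | MeasurableSpace.comap f inferInstance⟧) z * π.real (f ⁻¹' {f z}) =
      π.real (f ⁻¹' {f z} ∩ S) := by
  have hG : MeasurableSet (f ⁻¹' {f z}) := hf (measurableSet_singleton _)
  have hconst : Set.EqOn (π⟦S | MeasurableSpace.comap f inferInstance⟧)
      (fun _ => (π⟦S | MeasurableSpace.comap f inferInstance⟧) z) (f ⁻¹' {f z}) :=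
    fun _ hx => stronglyMeasurable_condExp.factorsThrough hx
  calc (π⟦S | MeasurableSpace.comap f inferInstance⟧) z * π.real (f ⁻¹' {f z})
      = ∫ x in f ⁻¹' {f z}, (π⟦S | MeasurableSpace.comap f inferInstance⟧) x ∂π := by
        rw [setIntegral_congr_fun hG hconst, setIntegral_const, smul_eq_mul, mul_comm]
    _ = ∫ x in f ⁻¹' {f z}, S.indicator (fun _ => (1 : ℝ)) x ∂π :=
        setIntegral_condExp hf.comap_le ((integrable_const _).indicator hS)
          ⟨_, measurableSet_singleton _, rfl⟩
    _ = π.real (f ⁻¹' {f z} ∩ S) := by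
        rw [setIntegral_indicator hS, setIntegral_const, smul_eq_mul, mul_one]

lemma measureReal_cond_apply [MeasurableSpace Ω] {π : Measure Ω} {G : Set Ω}
    (hG : MeasurableSet G) (S : Set Ω) : π[|G].real S = π.real (G ∩ S) / π.real G := by
  rw [measureReal_def, cond_apply hG, ENNReal.toReal_mul, ENNReal.toReal_inv, ← measureReal_def,
    ← measureReal_def, div_eq_inv_mul]

lemma indep_cond_of_condIndep {m₁ m₂ : MeasurableSpace Ω} {mΩ : MeasurableSpace Ω}
    [StandardBorelSpace Ω] {f : Ω → β} (hf : Measurable f) (hm₁ : m₁ ≤ mΩ) (hm₂ : m₂ ≤ mΩ)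
    {π : Measure Ω} [IsFiniteMeasure π]
    (h : CondIndep (MeasurableSpace.comap f inferInstance) m₁ m₂ hf.comap_le π) (c : β) :
    Indep m₁ m₂ π[|f ⁻¹' {c}] := by
  have hG : MeasurableSet (f ⁻¹' {c}) := hf (measurableSet_singleton c)
  by_cases h0 : π (f ⁻¹' {c}) = 0
  · rw [cond_eq_zero_of_meas_eq_zero h0]
    exact (Indep_iff _ _ _).2 fun _ _ _ _ => by simp
  refine (Indep_iff _ _ _).2 fun A B hA hB => ?_
  obtain ⟨z, rfl, hz⟩ : ∃ z, f z = c ∧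
      (π⟦A ∩ B | MeasurableSpace.comap f inferInstance⟧) z =
        (π⟦A | MeasurableSpace.comap f inferInstance⟧) z *
          (π⟦B | MeasurableSpace.comap f inferInstance⟧) z :=
    ((frequently_ae_mem_iff.2 h0).and_eventually
      ((condIndep_iff _ _ _ hf.comap_le hm₁ hm₂ π).1 h A B hA hB)).exists
  have hcond : ∀ S, MeasurableSet S → π[|f ⁻¹' {f z}].real S =
      (π⟦S | MeasurableSpace.comap f inferInstance⟧) z := fun S hS => by
    rw [measureReal_cond_apply hG, ← condExp_mul_measureReal_preimage_singleton hf π hS,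
      mul_div_cancel_right₀ _ ((measureReal_ne_zero_iff (by finiteness)).2 h0)]
  rw [← ENNReal.toReal_eq_toReal_iff' (by finiteness) (by finiteness), ENNReal.toReal_mul]
  simp only [← measureReal_def]
  rw [hcond _ ((hm₁ _ hA).inter (hm₂ _ hB)), hcond _ (hm₁ _ hA), hcond _ (hm₂ _ hB), hz]

lemma measureReal_inter_of_condIndep {m₁ m₂ : MeasurableSpace Ω} {mΩ : MeasurableSpace Ω}
    [StandardBorelSpace Ω] {f : Ω → β} (hf : Measurable f) (hm₁ : m₁ ≤ mΩ) (hm₂ : m₂ ≤ mΩ)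
    {π : Measure Ω} [IsFiniteMeasure π]
    (h : CondIndep (MeasurableSpace.comap f inferInstance) m₁ m₂ hf.comap_le π) {c : β}
    {A B : Set Ω} (hA : MeasurableSet[m₁] A) (hB : MeasurableSet[m₂] B) (hBc : B ⊆ f ⁻¹' {c}) :
    π.real (A ∩ B) = π.real (A ∩ f ⁻¹' {c}) * π[|f ⁻¹' {c}].real B := by
  have hG : MeasurableSet (f ⁻¹' {c}) := hf (measurableSet_singleton c)
  have hcond : ∀ S, π.real (f ⁻¹' {c} ∩ S) = π[|f ⁻¹' {c}].real S * π.real (f ⁻¹' {c}) :=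
    fun S => by
      rw [measureReal_def, ← cond_mul_eq_inter hG, ENNReal.toReal_mul, measureReal_def,
        measureReal_def]
  have hindep : π[|f ⁻¹' {c}].real (A ∩ B) = π[|f ⁻¹' {c}].real A * π[|f ⁻¹' {c}].real B := by
    simp only [measureReal_def,
      (Indep_iff _ _ _).1 (indep_cond_of_condIndep hf hm₁ hm₂ h c) A B hA hB, ENNReal.toReal_mul]
  calc π.real (A ∩ B) = π.real (f ⁻¹' {c} ∩ (A ∩ B)) := by
        rw [Set.inter_eq_right.2 (Set.inter_subset_right.trans hBc)]
    _ = π.real (f ⁻¹' {c} ∩ A) * π[|f ⁻¹' {c}].real B := by rw [hcond, hindep, hcond]; ring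
    _ = π.real (A ∩ f ⁻¹' {c}) * π[|f ⁻¹' {c}].real B := by rw [Set.inter_comm]

lemma measureReal_cond_map {Ω' : Type*} [MeasurableSpace Ω] [MeasurableSpace Ω']
    {π : Measure Ω} {g : Ω → Ω'} (hg : Measurable g) {C A : Set Ω'} (hC : MeasurableSet C)
    (hA : MeasurableSet A) : (π.map g)[|C].real A = π[|g ⁻¹' C].real (g ⁻¹' A) := by
  rw [measureReal_cond_apply hC, measureReal_cond_apply (hg hC), map_measureReal_apply hg hC,
    map_measureReal_apply hg (hC.inter hA), Set.preimage_inter]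

end Conditioning

section OffDiagonal

variable {α : Type*} [MeasurableSpace α]

lemma measurableSet_offDiag [MeasurableEq α] {S : Set α} (hS : MeasurableSet S) :
    MeasurableSet S.offDiag := by
  rw [← Set.prod_sdiff_diagonal]
  exact (hS.prod hS).diff measurableSet_diagonal

variable {π : Measure (α × α)} [IsFiniteMeasure π]

lemma measureReal_offDiag_union [MeasurableEq α] {S R : Set α} (hS : MeasurableSet S)
    (hR : MeasurableSet R) (h : Disjoint S R) :
    π.real (S ∪ R).offDiag =
      π.real S.offDiag + π.real R.offDiag + π.real (S ×ˢ R) + π.real (R ×ˢ S) := by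
  have hSR : ∀ x ∈ S, x ∉ R := fun _ hx => Set.disjoint_left.1 h hx
  rw [Set.offDiag_union h, measureReal_union _ (hR.prod hS), measureReal_union _ (hS.prod hR),
    measureReal_union _ (measurableSet_offDiag hR)]
  all_goals
    rw [Set.disjoint_left]
    rintro ⟨x, y⟩
    simp only [Set.mem_union, Set.mem_offDiag, Set.mem_prod]
    grind

lemma abs_sub_add_measureReal_offDiag_le [MeasurableEq α] {S C : Set α} (hS : MeasurableSet S)
    (hC : MeasurableSet C) (h : S ⊆ C) :
    |π.real (S ×ˢ C) - π.real (C ×ˢ S)| + π.real S.offDiag + π.real (C \ S).offDiag ≤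
      π.real C.offDiag := by
  have hR := hC.diff hS
  have hdisj : Disjoint S (C \ S) := Set.disjoint_sdiff_right
  have hunion : S ∪ C \ S = C := Set.union_sdiff_cancel h
  have hSC : π.real (S ×ˢ C) = π.real (S ×ˢ S) + π.real (S ×ˢ (C \ S)) := by
    rw [← measureReal_union (Set.Disjoint.set_prod_right hdisj _ _) (hS.prod hR),
      ← Set.prod_union, hunion]
  have hCS : π.real (C ×ˢ S) = π.real (S ×ˢ S) + π.real ((C \ S) ×ˢ S) := by
    rw [← measureReal_union (Set.Disjoint.set_prod_left hdisj _ _) (hR.prod hS),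
      ← Set.union_prod, hunion]
  have hoff := measureReal_offDiag_union (π := π) hS hR hdisj
  rw [hunion] at hoff
  have habs : |π.real (S ×ˢ C) - π.real (C ×ˢ S)| ≤
      π.real (S ×ˢ (C \ S)) + π.real ((C \ S) ×ˢ S) := by
    rw [hSC, hCS, add_sub_add_left_eq_sub]
    exact abs_sub_le_of_nonneg_of_le measureReal_nonneg (le_add_of_nonneg_right measureReal_nonneg)
      measureReal_nonneg (le_add_of_nonneg_left measureReal_nonneg)
  linarith

lemma sum_abs_sub_le_measureReal_offDiag [MeasurableEq α] {C : ℕ → Set α}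
    (hC : ∀ n, MeasurableSet (C n)) (hanti : Antitone C) (k : ℕ) :
    ∑ n ∈ Finset.range k, |π.real (C (n + 1) ×ˢ C n) - π.real (C n ×ˢ C (n + 1))| ≤
      π.real (C 0).offDiag := by
  calc ∑ n ∈ Finset.range k, |π.real (C (n + 1) ×ˢ C n) - π.real (C n ×ˢ C (n + 1))|
      ≤ ∑ n ∈ Finset.range k, (π.real (C n).offDiag - π.real (C (n + 1)).offDiag) := by
        refine Finset.sum_le_sum fun n _ => ?_
        have hstep := abs_sub_add_measureReal_offDiag_le (π := π) (hC (n + 1)) (hC n)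
          (hanti n.le_succ)
        have hnonneg : 0 ≤ π.real (C n \ C (n + 1)).offDiag := measureReal_nonneg
        linarith
    _ = π.real (C 0).offDiag - π.real (C k).offDiag := Finset.sum_range_sub' _ k
    _ ≤ π.real (C 0).offDiag := sub_le_self _ measureReal_nonneg

lemma abs_map_fst_sub_map_snd_add_offDiag_le [MeasurableEq α] {A B : Set α}
    (hA : MeasurableSet A) (hAB : Disjoint A B) :
    |(π.map Prod.fst).real A - (π.map Prod.snd).real A| + π.real A.offDiag + π.real B.offDiag ≤
      π.real (Set.univ : Set α).offDiag := by
  have hB : π.real B.offDiag ≤ π.real (Set.univ \ A).offDiag :=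
    measureReal_mono (Set.offDiag_mono fun x hx =>
      ⟨Set.mem_univ x, Set.disjoint_right.1 hAB hx⟩)
  have hsplit := abs_sub_add_measureReal_offDiag_le (π := π) hA .univ A.subset_univ
  rw [Set.prod_univ, Set.univ_prod] at hsplit
  rw [map_measureReal_apply measurable_fst hA, map_measureReal_apply measurable_snd hA]
  linarith

lemma max_sub_measureReal_offDiag_le {C : Set α} (hC : MeasurableSet C) :
    max ((π.map Prod.fst).real C) ((π.map Prod.snd).real C) -
      π.real (Set.univ : Set α).offDiag ≤ π.real (C ×ˢ C) := by
  have hle : ∀ S : Set (α × α), S ⊆ C ×ˢ C ∪ (Set.univ : Set α).offDiag →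
      π.real S ≤ π.real (C ×ˢ C) + π.real (Set.univ : Set α).offDiag := fun S hS =>
    (measureReal_mono hS).trans (measureReal_union_le _ _)
  rw [map_measureReal_apply measurable_fst hC, map_measureReal_apply measurable_snd hC,
    sub_le_iff_le_add, max_le_iff]
  constructor <;> refine hle _ fun q hq => ?_ <;> by_cases h : q.1 = q.2 <;>
    simp_all

end OffDiagonal

section PrefixCylinder

variable {d T : ℕ}

/-- The paths that agree with `z` at the first `n` times. -/
def prefixCylinder (z : Traj d T) (n : ℕ) : Set (Traj d T) :=
  {x | ∀ i : Fin T, i.val < n → x i = z i}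

lemma self_mem_prefixCylinder (z : Traj d T) (n : ℕ) : z ∈ prefixCylinder z n :=
  fun _ _ => rfl

lemma prefixCylinder_antitone (z : Traj d T) : Antitone (prefixCylinder z) :=
  fun _ _ h _ hx i hi => hx i (hi.trans_le h)

lemma disjoint_prefixCylinder {z w : Traj d T} {n : ℕ} {i : Fin T} (hi : i.val < n)
    (h : z i ≠ w i) : Disjoint (prefixCylinder z n) (prefixCylinder w n) :=
  Set.disjoint_left.2 fun _ hz hw => h ((hz i hi).symm.trans (hw i hi))

lemma preimage_restr_singleton {n : ℕ} (h : n ≤ T) (z : Traj d T) :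
    restr d h ⁻¹' {restr d h z} = prefixCylinder z n := by
  ext x
  exact ⟨fun hx i hi => congrFun hx ⟨i, hi⟩, fun hx => funext fun i => hx _ i.isLt⟩

lemma measurableSet_prefixCylinder (z : Traj d T) (n : ℕ) :
    MeasurableSet (prefixCylinder z n) := by
  simp only [prefixCylinder, Set.ofPred_forall]
  exact .iInter fun i => .iInter fun _ =>
    measurableSet_eq_fun (measurable_pi_apply i) measurable_const

end PrefixCylinder

section Bicausal

variable {d T : ℕ} {π : Measure (Traj d T × Traj d T)} [IsFiniteMeasure π]

lemma IsBicausal.measureReal_prod_prefixCylinder_left (hπ : IsBicausal d T π) {n : ℕ}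
    (hn : 1 ≤ n) (h : n + 1 ≤ T) (z w : Traj d T) {A : Set (Traj d T)} (hA : MeasurableSet A)
    (hAz : A ⊆ prefixCylinder z n) :
    π.real (A ×ˢ prefixCylinder w n) = π.real (prefixCylinder z n ×ˢ prefixCylinder w n) *
      (π.map Prod.fst)[|prefixCylinder z n].real A := by
  have hnT : n ≤ T := Nat.le_of_succ_le h
  have hcyl := measurableSet_prefixCylinder z n
  rw [measureReal_cond_map measurable_fst hcyl hA, Set.prod_eq, Set.prod_eq, Set.inter_comm,
    Set.inter_comm (Prod.fst ⁻¹' prefixCylinder z n)]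
  rw [← preimage_restr_singleton hnT z] at hAz ⊢
  exact measureReal_inter_of_condIndep ((measurable_restr d hnT).comp measurable_fst)
    (sigmaY_le d T hnT) (sigmaX_le d T le_rfl) (hπ n hn h).1
    ⟨{restr d hnT w}, measurableSet_singleton _, by rw [← preimage_restr_singleton hnT w]; rfl⟩
    ⟨A, hA, rfl⟩ (Set.preimage_mono hAz)

lemma IsBicausal.measureReal_prod_prefixCylinder_right (hπ : IsBicausal d T π) {n : ℕ}
    (hn : 1 ≤ n) (h : n + 1 ≤ T) (z w : Traj d T) {A : Set (Traj d T)} (hA : MeasurableSet A)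
    (hAw : A ⊆ prefixCylinder w n) :
    π.real (prefixCylinder z n ×ˢ A) = π.real (prefixCylinder z n ×ˢ prefixCylinder w n) *
      (π.map Prod.snd)[|prefixCylinder w n].real A := by
  have hnT : n ≤ T := Nat.le_of_succ_le h
  have hcyl := measurableSet_prefixCylinder w n
  rw [measureReal_cond_map measurable_snd hcyl hA, Set.prod_eq, Set.prod_eq]
  rw [← preimage_restr_singleton hnT w] at hAw ⊢
  exact measureReal_inter_of_condIndep ((measurable_restr d hnT).comp measurable_snd)
    (sigmaX_le d T hnT) (sigmaY_le d T le_rfl) (hπ n hn h).2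
    ⟨{restr d hnT z}, measurableSet_singleton _, by rw [← preimage_restr_singleton hnT z]; rfl⟩
    ⟨A, hA, rfl⟩ (Set.preimage_mono hAw)

/-- The mass that a bicausal coupling `π` must at least separate at step `n + 1` among the pairs
whose components have both followed `z` for `n` steps: the mass of these pairs, times the difference
of the conditional probabilities, under the two marginals of `π`, of staying on `z`. -/
def splittingMass (π : Measure (Traj d T × Traj d T)) (z : Traj d T) (n : ℕ) : ℝ :=
  π.real (prefixCylinder z n ×ˢ prefixCylinder z n) *
    |(π.map Prod.fst)[|prefixCylinder z n].real (prefixCylinder z (n + 1)) -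
      (π.map Prod.snd)[|prefixCylinder z n].real (prefixCylinder z (n + 1))|

lemma IsBicausal.sum_splittingMass_le (hπ : IsBicausal d T π) (z : Traj d T) :
    ∑ n ∈ Finset.range (T - 1), splittingMass π z (n + 1) ≤
      π.real (prefixCylinder z 1).offDiag := by
  refine le_trans (Finset.sum_le_sum fun n hn => ?_) (sum_abs_sub_le_measureReal_offDiag
    (C := fun n => prefixCylinder z (n + 1)) (fun n => measurableSet_prefixCylinder z (n + 1))
    (fun _ _ h => prefixCylinder_antitone z (by gcongr)) (T - 1))
  have hnT : n + 1 + 1 ≤ T := by have := Finset.mem_range.1 hn; omega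
  have hsub := prefixCylinder_antitone z (n + 1).le_succ
  have hcyl := measurableSet_prefixCylinder z (n + 1 + 1)
  rw [hπ.measureReal_prod_prefixCylinder_left n.succ_pos hnT z z hcyl hsub,
    hπ.measureReal_prod_prefixCylinder_right n.succ_pos hnT z z hcyl hsub, ← mul_sub, abs_mul,
    abs_of_nonneg measureReal_nonneg, splittingMass]

lemma IsBicausal.add_sum_splittingMass_le (hπ : IsBicausal d T π) {z w : Traj d T}
    (hzw : Disjoint (prefixCylinder z 1) (prefixCylinder w 1)) :
    |(π.map Prod.fst).real (prefixCylinder z 1) - (π.map Prod.snd).real (prefixCylinder z 1)| +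
        ∑ n ∈ Finset.range (T - 1), splittingMass π z (n + 1) +
        ∑ n ∈ Finset.range (T - 1), splittingMass π w (n + 1) ≤
      π.real (Set.univ : Set (Traj d T)).offDiag := by
  have hfirst := abs_map_fst_sub_map_snd_add_offDiag_le (π := π)
    (measurableSet_prefixCylinder z 1) hzw
  linarith [hπ.sum_splittingMass_le z, hπ.sum_splittingMass_le w]

end Bicausal

section TotalVariation

variable {d T : ℕ}

lemma setLIntegral_ne_one_weight (π : Measure (Traj d T × Traj d T)) [IsFiniteMeasure π] :
    ∫⁻ _ in {q : Traj d T × Traj d T | q.1 ≠ q.2},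
        (ENNReal.ofReal 1 + ENNReal.ofReal 1) ∂π =
      ENNReal.ofReal (2 * π.real (Set.univ : Set (Traj d T)).offDiag) := by
  rw [setLIntegral_const, ENNReal.ofReal_mul zero_le_two, ofReal_measureReal, Set.offDiag_univ,
    ← ENNReal.ofReal_add zero_le_one zero_le_one, one_add_one_eq_two]
  rfl

lemma ofReal_two_mul_abs_sub_le_TVw (μ ν : Measure (Traj d T)) {A : Set (Traj d T)}
    (hA : MeasurableSet A) :
    ENNReal.ofReal (2 * |μ.real A - ν.real A|) ≤ TVw (fun _ => 1) μ ν := by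
  refine le_iInf₂ ?_
  rintro π ⟨_, rfl, rfl⟩
  rw [setLIntegral_ne_one_weight]
  gcongr
  have hsplit := abs_map_fst_sub_map_snd_add_offDiag_le (π := π) hA (Set.disjoint_empty A)
  have hnonneg : 0 ≤ π.real A.offDiag := measureReal_nonneg
  rw [Set.offDiag_empty, measureReal_empty, add_zero] at hsplit
  linarith

lemma ofReal_mul_TVw_le_ATVw {μ ν : Measure (Traj d T)} {c δ : ℝ} (hδ : 0 ≤ δ)
    (hTV : TVw (fun _ => 1) μ ν ≤ ENNReal.ofReal (2 * δ))
    (h : ∀ π ∈ BCpl μ ν, c * δ ≤ π.real (Set.univ : Set (Traj d T)).offDiag) :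
    ENNReal.ofReal c * TVw (fun _ => 1) μ ν ≤ ATVw (fun _ => 1) μ ν := by
  calc ENNReal.ofReal c * TVw (fun _ => 1) μ ν
      ≤ ENNReal.ofReal c * ENNReal.ofReal (2 * δ) := by gcongr
    _ = ENNReal.ofReal (2 * (c * δ)) := by rw [← ENNReal.ofReal_mul' (by positivity), mul_left_comm]
    _ ≤ ATVw (fun _ => 1) μ ν := le_iInf₂ fun π hπ => by
        have := hπ.1.1
        rw [setLIntegral_ne_one_weight]
        gcongr
        exact h π hπ

end TotalVariation

section Mixture

open unitInterval

variable {α β : Type*} [MeasurableSpace α] [MeasurableSpace β]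

/-- The mixture giving weight `p` to `μ` and weight `1 - p` to `ν`. -/
abbrev mixture (p : I) (μ ν : Measure α) : Measure α :=
  toNNReal p • μ + toNNReal (σ p) • ν

lemma measureReal_mixture (p : I) (μ ν : Measure α) [IsFiniteMeasure μ] [IsFiniteMeasure ν]
    (S : Set α) : (mixture p μ ν).real S = p * μ.real S + (1 - p) * ν.real S := by
  rw [mixture, measureReal_add_apply, measureReal_nnreal_smul_apply,
    measureReal_nnreal_smul_apply, coe_toNNReal, coe_toNNReal, coe_symm_eq]

lemma map_mixture (p : I) (μ ν : Measure α) {f : α → β} (hf : Measurable f) :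
    (mixture p μ ν).map f = mixture p (μ.map f) (ν.map f) := by
  rw [Measure.map_add _ _ hf, Measure.map_smul, Measure.map_smul]

lemma TVw_mixture_le {d T : ℕ} (p : I) (μ ν ρ : Measure (Traj d T)) [IsProbabilityMeasure μ]
    [IsProbabilityMeasure ν] [IsProbabilityMeasure ρ] :
    TVw (fun _ => 1) (mixture p μ ρ) (mixture p ν ρ) ≤ ENNReal.ofReal (2 * p) := by
  have hdiag : Measurable fun x : Traj d T => (x, x) := measurable_id.prodMk measurable_id
  have hprob : IsProbabilityMeasure (ρ.map fun x => (x, x)) :=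
    Measure.isProbabilityMeasure_map hdiag.aemeasurable
  set π := mixture p (μ.prod ν) (ρ.map fun x => (x, x))
  have hπ : π ∈ Cpl (mixture p μ ρ) (mixture p ν ρ) := by
    refine ⟨inferInstance, ?_, ?_⟩
    · rw [map_mixture _ _ _ measurable_fst, Measure.map_map measurable_fst hdiag,
        Measure.map_fst_prod, measure_univ, one_smul]
      exact congrArg (mixture p μ) Measure.map_id
    · rw [map_mixture _ _ _ measurable_snd, Measure.map_map measurable_snd hdiag,
        Measure.map_snd_prod, measure_univ, one_smul]
      exact congrArg (mixture p ν) Measure.map_id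
  refine (iInf₂_le π hπ).trans ?_
  rw [setLIntegral_ne_one_weight]
  gcongr
  have hoff : (ρ.map fun x => (x, x)).real (Set.univ : Set (Traj d T)).offDiag = 0 := by
    have hempty : (fun x => (x, x)) ⁻¹' (Set.univ : Set (Traj d T)).offDiag = ∅ :=
      Set.eq_empty_of_forall_notMem fun _ hx => hx.2.2 rfl
    rw [map_measureReal_apply hdiag (measurableSet_offDiag .univ), hempty, measureReal_empty]
  rw [measureReal_mixture, hoff, mul_zero, add_zero]
  exact mul_le_of_le_one_right p.2.1 measureReal_le_one

end Mixture

section KilledPath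

open unitInterval

variable {d T : ℕ}

/-- The path that follows `z` as long as `u ≤ r ^ i` and sits at `0` afterwards; for `u` uniform on
`[0, 1]` it survives each step with probability `r`. -/
def killedPath (r : I) (z : Traj d T) (u : I) : Traj d T :=
  fun i => if u ≤ r ^ i.val then z i else 0

lemma measurable_killedPath (r : I) (z : Traj d T) : Measurable (killedPath r z) :=
  measurable_pi_lambda _ fun _ =>
    Measurable.ite measurableSet_Iic measurable_const measurable_const

/-- The law of `z` killed at each step with probability `1 - r`. -/
def killedLaw (r : I) (z : Traj d T) : Measure (Traj d T) :=
  volume.map (killedPath r z)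

instance (r : I) (z : Traj d T) : IsProbabilityMeasure (killedLaw r z) :=
  Measure.isProbabilityMeasure_map (measurable_killedPath r z).aemeasurable

lemma killedPath_mem_prefixCylinder_one (r : I) (z : Traj d T) (u : I) :
    killedPath r z u ∈ prefixCylinder z 1 := fun i hi => by
  rw [killedPath, Nat.lt_one_iff.1 hi, pow_zero, if_pos le_one']

lemma killedPath_preimage_prefixCylinder (r : I) {z : Traj d T} (hz : ∀ i, z i ≠ 0) {n : ℕ}
    (hn : n < T) : killedPath r z ⁻¹' prefixCylinder z (n + 1) = Set.Iic (r ^ n) := by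
  ext u
  constructor
  · intro hu
    by_contra hlt
    exact hz ⟨n, hn⟩ ((hu ⟨n, hn⟩ n.lt_succ_self).symm.trans (if_neg hlt))
  · exact fun hu i hi =>
      if_pos (hu.trans (pow_le_pow_right_of_le_one' le_one' (Nat.lt_succ_iff.1 hi)))

lemma killedLaw_real_prefixCylinder_self (r : I) {z : Traj d T} (hz : ∀ i, z i ≠ 0) {n : ℕ}
    (hn : n < T) : (killedLaw r z).real (prefixCylinder z (n + 1)) = (r : ℝ) ^ n := by
  rw [killedLaw, map_measureReal_apply (measurable_killedPath r z)
    (measurableSet_prefixCylinder z _), killedPath_preimage_prefixCylinder r hz hn,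
    measureReal_def, unitInterval.volume_Iic, ENNReal.toReal_ofReal (r ^ n).2.1]
  rfl

lemma killedLaw_real_prefixCylinder_of_disjoint (r : I) {z w : Traj d T}
    (hzw : Disjoint (prefixCylinder z 1) (prefixCylinder w 1)) (n : ℕ) :
    (killedLaw r w).real (prefixCylinder z (n + 1)) = 0 := by
  have hempty : killedPath r w ⁻¹' prefixCylinder z (n + 1) = ∅ :=
    Set.eq_empty_of_forall_notMem fun u hu => Set.disjoint_left.1 hzw
      (prefixCylinder_antitone z (Nat.le_add_left 1 n) hu) (killedPath_mem_prefixCylinder_one r w u)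
  rw [killedLaw, map_measureReal_apply (measurable_killedPath r w)
    (measurableSet_prefixCylinder z _), hempty, measureReal_empty]

end KilledPath

section PerturbedLaw

open unitInterval
open scoped NNReal

variable {d T : ℕ}

/-- The law that picks `z` or `w` with probability `1 / 2` each and kills the chosen path. -/
def killedPairLaw (r : I) (z w : Traj d T) : Measure (Traj d T) :=
  (2⁻¹ : ℝ≥0) • (killedLaw r z + killedLaw r w)

instance (r : I) (z w : Traj d T) : IsProbabilityMeasure (killedPairLaw r z w) := by
  refine ⟨?_⟩
  rw [killedPairLaw, Measure.smul_apply, Measure.add_apply, measure_univ, measure_univ,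
    one_add_one_eq_two, ENNReal.smul_def, smul_eq_mul, ENNReal.coe_inv two_ne_zero]
  exact ENNReal.inv_mul_cancel two_ne_zero (by finiteness)

lemma killedPairLaw_comm (r : I) (z w : Traj d T) : killedPairLaw r z w = killedPairLaw r w z := by
  rw [killedPairLaw, add_comm, killedPairLaw]

lemma killedPairLaw_real_prefixCylinder_left (r : I) {z w : Traj d T} (hz : ∀ i, z i ≠ 0)
    (hzw : Disjoint (prefixCylinder z 1) (prefixCylinder w 1)) {n : ℕ} (hn : n < T) :
    (killedPairLaw r z w).real (prefixCylinder z (n + 1)) = (r : ℝ) ^ n / 2 := by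
  rw [killedPairLaw, measureReal_nnreal_smul_apply, measureReal_add_apply,
    killedLaw_real_prefixCylinder_self r hz hn, killedLaw_real_prefixCylinder_of_disjoint r hzw,
    add_zero, NNReal.coe_inv, NNReal.coe_ofNat, inv_mul_eq_div]

/-- The law `killedPairLaw r z w` with a fraction `δ` of its mass moved to the unkilled path `z`.
The two laws of the sharpness example are `perturbedLaw r δ z w` and `perturbedLaw r δ w z`. -/
def perturbedLaw (r δ : I) (z w : Traj d T) : Measure (Traj d T) :=
  mixture δ (.dirac z) (killedPairLaw r z w)

instance (r δ : I) (z w : Traj d T) : IsProbabilityMeasure (perturbedLaw r δ z w) :=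
  inferInstanceAs (IsProbabilityMeasure (mixture _ _ _))

lemma TVw_perturbedLaw_le (r δ : I) (z w : Traj d T) :
    TVw (fun _ => 1) (perturbedLaw r δ z w) (perturbedLaw r δ w z) ≤ ENNReal.ofReal (2 * δ) := by
  rw [perturbedLaw, perturbedLaw, killedPairLaw_comm r w z]
  exact TVw_mixture_le δ _ _ _

variable (r δ : I) {z w : Traj d T} {n : ℕ}

lemma perturbedLaw_real_prefixCylinder_left (hz : ∀ i, z i ≠ 0)
    (hzw : Disjoint (prefixCylinder z 1) (prefixCylinder w 1)) (hn : n < T) :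
    (perturbedLaw r δ z w).real (prefixCylinder z (n + 1)) = (r : ℝ) ^ n * ((1 - δ) / 2) + δ := by
  rw [perturbedLaw, measureReal_mixture, killedPairLaw_real_prefixCylinder_left r hz hzw hn,
    measureReal_def, Measure.dirac_apply_of_mem (self_mem_prefixCylinder z _), ENNReal.toReal_one]
  ring

lemma perturbedLaw_real_prefixCylinder_right (hw : ∀ i, w i ≠ 0)
    (hzw : Disjoint (prefixCylinder z 1) (prefixCylinder w 1)) (hn : n < T) :
    (perturbedLaw r δ z w).real (prefixCylinder w (n + 1)) = (r : ℝ) ^ n * ((1 - δ) / 2) := by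
  have hzn : z ∉ prefixCylinder w (n + 1) := fun h => Set.disjoint_left.1 hzw
    (self_mem_prefixCylinder z 1) (prefixCylinder_antitone w (Nat.le_add_left 1 n) h)
  rw [perturbedLaw, measureReal_mixture, killedPairLaw_comm,
    killedPairLaw_real_prefixCylinder_left r hw hzw.symm hn, measureReal_def,
    Measure.dirac_apply' z (measurableSet_prefixCylinder w _), Set.indicator_of_notMem hzn,
    ENNReal.toReal_zero]
  ring

lemma abs_perturbedLaw_real_sub (hz : ∀ i, z i ≠ 0)
    (hzw : Disjoint (prefixCylinder z 1) (prefixCylinder w 1)) (hn : n < T) :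
    |(perturbedLaw r δ z w).real (prefixCylinder z (n + 1)) -
      (perturbedLaw r δ w z).real (prefixCylinder z (n + 1))| = δ := by
  rw [perturbedLaw_real_prefixCylinder_left r δ hz hzw hn,
    perturbedLaw_real_prefixCylinder_right r δ hz hzw.symm hn, add_sub_cancel_left,
    abs_of_nonneg δ.2.1]

end PerturbedLaw

section LowerBound

open unitInterval

-- `p + δ` and `p` stand for the masses of a prefix cylinder under the two laws, `r * p + δ` and
-- `r * p` for those of its successor, `x` for the off-diagonal mass of a coupling, and `e` for the
-- mass with which both components lie in the cylinder.
lemma le_mul_abs_div_sub_div {r δ p x e : ℝ} (hp : 0 < p) (hδ : 0 ≤ δ) (hx : 0 ≤ x) (hr : r ≤ 1)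
    (hδp : δ ≤ r * p) (he : p + δ - x ≤ e) :
    (1 - r) * δ - r * x ≤ e * |(r * p + δ) / (p + δ) - r * p / p| := by
  have hpδ : 0 < p + δ := by positivity
  have hr0 : 0 ≤ r := nonneg_of_mul_nonneg_left (hδ.trans hδp) hp
  have hgap : (r * p + δ) / (p + δ) - r * p / p = (1 - r) * δ / (p + δ) := by
    field_simp
    ring
  have hgap_nonneg : 0 ≤ (1 - r) * δ / (p + δ) :=
    div_nonneg (mul_nonneg (sub_nonneg.2 hr) hδ) hpδ.le
  have hgap_le : (1 - r) * δ / (p + δ) ≤ r := by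
    rw [div_le_iff₀ hpδ]
    linarith [mul_nonneg hr0 hδ]
  rw [hgap, abs_of_nonneg hgap_nonneg]
  calc (1 - r) * δ - r * x ≤ (1 - r) * δ - (1 - r) * δ / (p + δ) * x := by gcongr
    _ = (p + δ - x) * ((1 - r) * δ / (p + δ)) := by field_simp
    _ ≤ e * ((1 - r) * δ / (p + δ)) := by gcongr

variable {d T : ℕ} {r δ : I} {z w : Traj d T} {n : ℕ}

lemma le_mul_abs_perturbedLaw_cond_sub (hr : 0 < r) (hz : ∀ i, z i ≠ 0)
    (hzw : Disjoint (prefixCylinder z 1) (prefixCylinder w 1)) (hn : n + 1 < T)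
    (hδn : (δ : ℝ) ≤ r ^ (n + 1) * ((1 - δ) / 2)) {x e : ℝ} (hx : 0 ≤ x)
    (he : (perturbedLaw r δ z w).real (prefixCylinder z (n + 1)) - x ≤ e) :
    (1 - r) * δ - r * x ≤
      e * |(perturbedLaw r δ z w)[|prefixCylinder z (n + 1)].real (prefixCylinder z (n + 1 + 1)) -
        (perturbedLaw r δ w z)[|prefixCylinder z (n + 1)].real (prefixCylinder z (n + 1 + 1))| := by
  have hn' : n < T := Nat.lt_of_succ_lt hn
  have hcyl := measurableSet_prefixCylinder z (n + 1)
  have hsub := Set.inter_eq_right.2 (prefixCylinder_antitone z (n + 1).le_succ)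
  rw [perturbedLaw_real_prefixCylinder_left r δ hz hzw hn'] at he
  rw [measureReal_cond_apply hcyl, measureReal_cond_apply hcyl, hsub,
    perturbedLaw_real_prefixCylinder_left r δ hz hzw hn,
    perturbedLaw_real_prefixCylinder_left r δ hz hzw hn',
    perturbedLaw_real_prefixCylinder_right r δ hz hzw.symm hn,
    perturbedLaw_real_prefixCylinder_right r δ hz hzw.symm hn']
  rw [pow_succ', mul_assoc] at hδn ⊢
  have hr' : (0 : ℝ) < r := hr
  have hpow : (0 : ℝ) < r ^ n := by positivity
  have hδ' : (0 : ℝ) < 1 - δ := by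
    by_contra hδ
    have hnonpos : (r : ℝ) * (r ^ n * ((1 - δ) / 2)) ≤ 0 :=
      mul_nonpos_of_nonneg_of_nonpos hr'.le (mul_nonpos_of_nonneg_of_nonpos hpow.le (by linarith))
    linarith
  exact le_mul_abs_div_sub_div (by positivity) δ.2.1 hx r.2.2 hδn he

lemma le_splittingMass_left (hr : 0 < r) (hz : ∀ i, z i ≠ 0)
    (hzw : Disjoint (prefixCylinder z 1) (prefixCylinder w 1)) (hn : n + 1 < T)
    (hδn : (δ : ℝ) ≤ r ^ (n + 1) * ((1 - δ) / 2)) {π : Measure (Traj d T × Traj d T)}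
    (hπ : π ∈ Cpl (perturbedLaw r δ z w) (perturbedLaw r δ w z)) :
    (1 - r) * δ - r * π.real (Set.univ : Set (Traj d T)).offDiag ≤ splittingMass π z (n + 1) := by
  obtain ⟨_, hfst, hsnd⟩ := hπ
  have hmax := max_sub_measureReal_offDiag_le (π := π) (measurableSet_prefixCylinder z (n + 1))
  rw [splittingMass, hfst, hsnd]
  rw [hfst, hsnd] at hmax
  exact le_mul_abs_perturbedLaw_cond_sub hr hz hzw hn hδn measureReal_nonneg
    ((sub_le_sub_right (le_max_left _ _) _).trans hmax)

lemma le_splittingMass_right (hr : 0 < r) (hw : ∀ i, w i ≠ 0)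
    (hzw : Disjoint (prefixCylinder z 1) (prefixCylinder w 1)) (hn : n + 1 < T)
    (hδn : (δ : ℝ) ≤ r ^ (n + 1) * ((1 - δ) / 2)) {π : Measure (Traj d T × Traj d T)}
    (hπ : π ∈ Cpl (perturbedLaw r δ z w) (perturbedLaw r δ w z)) :
    (1 - r) * δ - r * π.real (Set.univ : Set (Traj d T)).offDiag ≤ splittingMass π w (n + 1) := by
  obtain ⟨_, hfst, hsnd⟩ := hπ
  have hmax := max_sub_measureReal_offDiag_le (π := π) (measurableSet_prefixCylinder w (n + 1))
  rw [splittingMass, hfst, hsnd, abs_sub_comm]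
  rw [hfst, hsnd] at hmax
  exact le_mul_abs_perturbedLaw_cond_sub hr hw hzw.symm hn hδn measureReal_nonneg
    ((sub_le_sub_right (le_max_right _ _) _).trans hmax)

lemma mul_le_mul_measureReal_offDiag_of_mem_BCpl (hT : 1 ≤ T) (hr : 0 < r)
    (hz : ∀ i, z i ≠ 0) (hw : ∀ i, w i ≠ 0)
    (hzw : Disjoint (prefixCylinder z 1) (prefixCylinder w 1))
    (hδT : (δ : ℝ) ≤ r ^ (T - 1) * ((1 - δ) / 2)) {π : Measure (Traj d T × Traj d T)}
    (hπ : π ∈ BCpl (perturbedLaw r δ z w) (perturbedLaw r δ w z)) :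
    (1 + 2 * ((T : ℝ) - 1) * (1 - r)) * δ ≤
      (1 + 2 * ((T : ℝ) - 1) * r) * π.real (Set.univ : Set (Traj d T)).offDiag := by
  obtain ⟨hcpl, _, hbicausal⟩ := hπ
  have hδn : ∀ n ∈ Finset.range (T - 1), (δ : ℝ) ≤ r ^ (n + 1) * ((1 - δ) / 2) := fun n hn =>
    hδT.trans (mul_le_mul_of_nonneg_right
      (pow_le_pow_of_le_one r.2.1 r.2.2 (Finset.mem_range.1 hn))
      (div_nonneg (sub_nonneg.2 δ.2.2) zero_le_two))
  have hlt : ∀ n ∈ Finset.range (T - 1), n + 1 < T := fun n hn => by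
    have := Finset.mem_range.1 hn
    omega
  have hsum_z := Finset.card_nsmul_le_sum _ _ _ fun n hn =>
    le_splittingMass_left hr hz hzw (hlt n hn) (hδn n hn) hcpl
  have hsum_w := Finset.card_nsmul_le_sum _ _ _ fun n hn =>
    le_splittingMass_right hr hw hzw (hlt n hn) (hδn n hn) hcpl
  rw [Finset.card_range, nsmul_eq_mul, Nat.cast_pred hT] at hsum_z hsum_w
  have htotal := hbicausal.add_sum_splittingMass_le hzw
  rw [hcpl.2.1, hcpl.2.2, abs_perturbedLaw_real_sub r δ hz hzw hT] at htotal
  linarith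

lemma sub_mul_le_of_mul_le {t r δ x ε : ℝ} (ht : 1 ≤ t) (hr : 0 ≤ r) (hδ : 0 ≤ δ)
    (hrε : 4 * t ^ 2 * r ≤ ε)
    (h : (1 + 2 * (t - 1) * (1 - r)) * δ ≤ (1 + 2 * (t - 1) * r) * x) :
    (2 * t - 1 - ε) * δ ≤ x := by
  have hpos : 0 < 1 + 2 * (t - 1) * r := by
    have := mul_nonneg (sub_nonneg.2 ht) hr
    linarith
  -- for `N = 2 * (t - 1)` the two sides differ by `N * (N + 2) * r - ε * (1 + N * r)`
  have hfactor : (1 + 2 * (t - 1) * r) * (2 * t - 1 - ε) ≤ 1 + 2 * (t - 1) * (1 - r) := by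
    nlinarith [mul_nonneg (sub_nonneg.2 ht) hr, mul_nonneg (mul_nonneg (sub_nonneg.2 ht) hr)
      ((by positivity : 0 ≤ 4 * t ^ 2 * r).trans hrε)]
  refine le_of_mul_le_mul_left (le_trans ?_ h) hpos
  rw [← mul_assoc]
  exact mul_le_mul_of_nonneg_right hfactor hδ

end LowerBound

section Sharpness

open unitInterval

lemma exists_unitInterval_mul_le {c ε : ℝ} (hc : 0 < c) (hε : 0 < ε) :
    ∃ r : I, 0 < r ∧ (r : ℝ) ≤ 1 / 3 ∧ c * r ≤ ε := by
  have hr : 0 < min (1 / 3) (ε / c) := lt_min (by norm_num) (div_pos hε hc)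
  refine ⟨⟨min (1 / 3) (ε / c), hr.le, (min_le_left _ _).trans (by norm_num)⟩, hr,
    min_le_left _ _, ?_⟩
  rw [← le_div_iff₀' hc]
  exact min_le_right _ _

lemma pow_le_pow_pred_mul {r : ℝ} (hr : 0 ≤ r) (hr3 : r ≤ 1 / 3) {T : ℕ} (hT : 1 ≤ T) :
    r ^ T ≤ r ^ (T - 1) * ((1 - r ^ T) / 2) := by
  have hpow : r ^ T ≤ r := pow_le_of_le_one hr (by linarith) (by omega)
  rw [← pow_sub_one_mul (by omega : T ≠ 0)] at hpow ⊢
  gcongr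
  linarith

theorem atv_tv_constant_sharp_general {d T : ℕ} (hd : 1 ≤ d) (hT : 1 ≤ T) {ε : ℝ} (hε : 0 < ε) :
    ∃ μ ν : Measure (Traj d T),
      IsProbabilityMeasure μ ∧ IsProbabilityMeasure ν ∧
      0 < TVw (fun _ => (1 : ℝ)) μ ν ∧
      ENNReal.ofReal (2 * (T : ℝ) - 1 - ε) * TVw (fun _ => (1 : ℝ)) μ ν ≤
        ATVw (fun _ => (1 : ℝ)) μ ν := by
  obtain ⟨r, hr, hr3, hrε⟩ := exists_unitInterval_mul_le (c := 4 * (T : ℝ) ^ 2) (by positivity) hε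
  let z : Traj d T := fun _ _ => 1
  let w : Traj d T := fun _ _ => -1
  have hz : ∀ i, z i ≠ 0 := fun _ h => one_ne_zero (congrFun h ⟨0, hd⟩)
  have hw : ∀ i, w i ≠ 0 := fun _ h => neg_ne_zero.2 one_ne_zero (congrFun h ⟨0, hd⟩)
  have hzw : Disjoint (prefixCylinder z 1) (prefixCylinder w 1) :=
    disjoint_prefixCylinder (i := ⟨0, hT⟩) one_pos fun h =>
      (by norm_num : (1 : ℝ) ≠ -1) (congrFun h ⟨0, hd⟩)
  have hδ : 0 < r ^ T := pow_pos hr T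
  refine ⟨perturbedLaw r (r ^ T) z w, perturbedLaw r (r ^ T) w z, inferInstance, inferInstance,
    ?_, ofReal_mul_TVw_le_ATVw hδ.le (TVw_perturbedLaw_le r _ z w) fun π hπ => ?_⟩
  · refine lt_of_lt_of_le ?_ (ofReal_two_mul_abs_sub_le_TVw _ _ (measurableSet_prefixCylinder z 1))
    rw [abs_perturbedLaw_real_sub r _ hz hzw hT]
    exact ENNReal.ofReal_pos.2 (mul_pos two_pos hδ)
  · exact sub_mul_le_of_mul_le (Nat.one_le_cast.2 hT) r.2.1 hδ.le hrε
      (mul_le_mul_measureReal_offDiag_of_mem_BCpl hT hr hz hw hzw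
        (pow_le_pow_pred_mul r.2.1 hr3 hT) hπ)

end Sharpness

/-- Sharpness of the constant `2T - 1`: for every `T ≥ 1` and `ε > 0` there
are probability measures `μ, ν` on `ℝ^T` with `TV(μ,ν) > 0` and
`ATV(μ,ν) ≥ (2T - 1 - ε) TV(μ,ν)`. -/
theorem atv_tv_constant_sharp (T : ℕ) (hT : 1 ≤ T) (ε : ℝ) (hε : 0 < ε) :
    ∃ μ ν : Measure (Traj 1 T),
      IsProbabilityMeasure μ ∧ IsProbabilityMeasure ν ∧
      0 < TVw (fun _ => (1 : ℝ)) μ ν ∧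
      ENNReal.ofReal (2 * (T : ℝ) - 1 - ε) * TVw (fun _ => (1 : ℝ)) μ ν ≤
        ATVw (fun _ => (1 : ℝ)) μ ν :=
  atv_tv_constant_sharp_general le_rfl hT hε

end
end
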